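/- Let n ≥ 3, 0 < α < 1, k ≥ 0. For every f ∈ C^{k,α}(B_R) with ‖f‖_α^{(k)} finite, the Newtonian potential N(f)(x) = ∫_{B_R} Γ(x−y)f(y)dy belongs to C^{k+2,α}(B_R) and satisfies ‖N(f)‖_α^{(k+2)} ≤ C ‖f‖_α^{(k)}, where C depends only on n, k, α and not on R. Consequently, for any m ≥ 1, ‖N^m(f)‖_α^{(k+2m)} ≤ C ‖f‖_α^{(k)}. -/

import Mathlib

open MeasureTheory Metric

noncomputable section

def sphArea (n : ℕ) : ℝ :=
  (μH[(n : ℝ) - 1] (sphere (0 : EuclideanSpace ℝ (Fin n)) 1)).toReal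

def fundSol (n : ℕ) (x : EuclideanSpace ℝ (Fin n)) : ℝ :=
  (1 / (n * (2 - (n : ℝ)) * sphArea n)) * ‖x‖ ^ ((2 : ℝ) - n)

def ee {n : ℕ} (i : Fin n) : EuclideanSpace ℝ (Fin n) := EuclideanSpace.single i 1

def supN {n : ℕ} (s : Set (EuclideanSpace ℝ (Fin n)))
    (g : EuclideanSpace ℝ (Fin n) → ℝ) : ℝ :=
  sSup ((fun x => |g x|) '' s)

def holdN {n : ℕ} (α : ℝ) (s : Set (EuclideanSpace ℝ (Fin n)))
    (g : EuclideanSpace ℝ (Fin n) → ℝ) : ℝ :=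
  sSup {c | ∃ x ∈ s, ∃ y ∈ s, x ≠ y ∧ c = |g x - g y| / ‖x - y‖ ^ α}

def alphaNorm (n : ℕ) (R α : ℝ) (g : EuclideanSpace ℝ (Fin n) → ℝ) : ℝ :=
  supN (ball (0 : EuclideanSpace ℝ (Fin n)) R) g +
    R ^ α * holdN α (ball (0 : EuclideanSpace ℝ (Fin n)) R) g

def kNorm (n : ℕ) (R α : ℝ) (k : ℕ) (f : EuclideanSpace ℝ (Fin n) → ℝ) : ℝ :=
  ⨆ v : Fin k → Fin n,
    alphaNorm n R α (fun x => iteratedFDeriv ℝ k f x (fun i => ee (v i)))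

/-- `f ∈ C^{k,α}(B_R)` with finite `‖f‖_α^{(k)}`. -/
def memCkα (n k : ℕ) (R α : ℝ) (f : EuclideanSpace ℝ (Fin n) → ℝ) : Prop :=
  ContDiffOn ℝ k f (ball (0 : EuclideanSpace ℝ (Fin n)) R) ∧
  ∀ w : Fin k → Fin n,
    BddAbove ((fun x => |iteratedFDeriv ℝ k f x (fun i => ee (w i))|) ''
      ball (0 : EuclideanSpace ℝ (Fin n)) R) ∧
    BddAbove {c | ∃ x ∈ ball (0 : EuclideanSpace ℝ (Fin n)) R,
      ∃ y ∈ ball (0 : EuclideanSpace ℝ (Fin n)) R, x ≠ y ∧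
        c = |iteratedFDeriv ℝ k f x (fun i => ee (w i)) -
              iteratedFDeriv ℝ k f y (fun i => ee (w i))| / ‖x - y‖ ^ α}

/-- The Newtonian potential operator over the ball of radius `R`. -/
def newt (n : ℕ) (R : ℝ) (f : EuclideanSpace ℝ (Fin n) → ℝ) :
    EuclideanSpace ℝ (Fin n) → ℝ :=
  fun x => ∫ y in ball (0 : EuclideanSpace ℝ (Fin n)) R, fundSol n (x - y) * f y

/-
A function lies in `C^{m,α}` of a ball, with control of the Hölder seminorm of its `m`-th
derivative, as soon as near each point `x` it is approximated to order `‖z - x‖ ^ (m + α)` by a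
polynomial of degree at most `m`: the polynomials attached to two points are then close on a ball
of radius comparable to the distance of the points, and the Bernstein–Markov inequality makes
their derivatives close.

For `m = k + 2` the Newtonian potential of `f` is approximated at `x` by splitting `f = T + w`
with `T` the Taylor polynomial of degree `k` at `x`. Since `w = O(‖y - x‖ ^ (k + α))`, Taylor
expansion of the kernel away from its singularity approximates the potential of `w` to the
required order. The potential of `T` over the ball `B_R` coincides on `B_R` with a polynomial: in
polar coordinates about `x`, a pair of directions `±θ` contributes the power sums `a ^ i + b ^ i`
of the endpoints `a`, `b` of the chord of `B_R` through `x` along `θ`, and these are polynomials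
in `a + b = -2 ⟪x, θ⟫` and `a * b = ‖x‖ ^ 2 - R ^ 2`.
-/

open Set Filter Topology
open scoped ContDiff Nat

section PolynomialMaps

variable {E F G H : Type*} [NormedAddCommGroup E] [NormedSpace ℝ E]
  [NormedAddCommGroup F] [NormedSpace ℝ F] [NormedAddCommGroup G] [NormedSpace ℝ G]
  [NormedAddCommGroup H] [NormedSpace ℝ H]

/-- Polynomial maps of degree at most `m` between real normed spaces, encoded as the smooth maps
whose derivative of order `m + 1` vanishes identically. -/
structure IsPolyMap (m : ℕ) (q : E → F) : Prop where
  contDiff : ContDiff ℝ ∞ q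
  iteratedFDeriv_succ : iteratedFDeriv ℝ (m + 1) q = 0

namespace IsPolyMap

variable {m l j : ℕ} {p q : E → F}

lemma contDiff_nat (hq : IsPolyMap m q) (j : ℕ) : ContDiff ℝ j q :=
  hq.contDiff.of_le (by exact_mod_cast le_top)

lemma iteratedFDeriv_eq_zero (hq : IsPolyMap m q) (hj : m < j) : iteratedFDeriv ℝ j q = 0 := by
  induction j, hj using Nat.le_induction with
  | base => exact hq.iteratedFDeriv_succ
  | succ j _ ih =>
    ext x v
    simp [iteratedFDeriv_succ_apply_left, ih]

lemma mono (hq : IsPolyMap m q) (h : m ≤ l) : IsPolyMap l q :=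
  ⟨hq.contDiff, hq.iteratedFDeriv_eq_zero (Nat.lt_succ_of_le h)⟩

protected lemma const (m : ℕ) (c : F) : IsPolyMap m (fun _ : E => c) :=
  ⟨contDiff_const, iteratedFDeriv_const_of_ne m.succ_ne_zero c⟩

protected lemma add (hp : IsPolyMap m p) (hq : IsPolyMap m q) :
    IsPolyMap m (fun x => p x + q x) where
  contDiff := hp.contDiff.add hq.contDiff
  iteratedFDeriv_succ := (iteratedFDeriv_add (hp.contDiff_nat _) (hq.contDiff_nat _)).trans
    (by rw [hp.iteratedFDeriv_succ, hq.iteratedFDeriv_succ, add_zero])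

protected lemma sub (hp : IsPolyMap m p) (hq : IsPolyMap m q) :
    IsPolyMap m (fun x => p x - q x) where
  contDiff := hp.contDiff.sub hq.contDiff
  iteratedFDeriv_succ := (iteratedFDeriv_sub (hp.contDiff_nat _) (hq.contDiff_nat _)).trans
    (by rw [hp.iteratedFDeriv_succ, hq.iteratedFDeriv_succ, sub_zero])

protected lemma sum {ι : Type*} {s : Finset ι} {q : ι → E → F}
    (hq : ∀ i ∈ s, IsPolyMap m (q i)) : IsPolyMap m (fun x => ∑ i ∈ s, q i x) where
  contDiff := ContDiff.sum fun i hi => (hq i hi).contDiff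
  iteratedFDeriv_succ := (iteratedFDeriv_sum fun i hi => (hq i hi).contDiff_nat _).trans
    (Finset.sum_eq_zero fun i hi => (hq i hi).iteratedFDeriv_succ)

lemma clm_comp (hq : IsPolyMap m q) (L : F →L[ℝ] G) : IsPolyMap m (fun x => L (q x)) where
  contDiff := L.contDiff.comp hq.contDiff
  iteratedFDeriv_succ := by
    ext1 x
    refine (L.iteratedFDeriv_comp_left (hq.contDiff_nat _).contDiffAt le_rfl).trans ?_
    rw [hq.iteratedFDeriv_succ]
    ext v
    simp

lemma const_smul (hq : IsPolyMap m q) (c : ℝ) : IsPolyMap m (fun x => c • q x) :=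
  hq.clm_comp (c • ContinuousLinearMap.id ℝ F)

lemma comp_sub_const (hq : IsPolyMap m q) (a : E) : IsPolyMap m (fun x => q (x - a)) where
  contDiff := hq.contDiff.comp (contDiff_id.sub contDiff_const)
  iteratedFDeriv_succ := by
    ext1 x
    rw [iteratedFDeriv_comp_sub, hq.iteratedFDeriv_succ, Pi.zero_apply, Pi.zero_apply]

lemma bilinear {p : E → F} {q : E → G} (hp : IsPolyMap m p) (hq : IsPolyMap l q)
    (B : F →L[ℝ] G →L[ℝ] H) : IsPolyMap (m + l) (fun x => B (p x) (q x)) where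
  contDiff := B.isBoundedBilinearMap.contDiff.comp (hp.contDiff.prodMk hq.contDiff)
  iteratedFDeriv_succ := by
    ext1 x
    rw [Pi.zero_apply, ← norm_le_zero_iff]
    refine (B.norm_iteratedFDeriv_le_of_bilinear (hp.contDiff_nat _) (hq.contDiff_nat _) x
      le_rfl).trans_eq ?_
    rw [Finset.sum_eq_zero, mul_zero]
    intro i _
    rcases lt_or_ge m i with hi | hi
    · simp [hp.iteratedFDeriv_eq_zero hi]
    · simp [hq.iteratedFDeriv_eq_zero (show l < m + l + 1 - i by omega)]

protected lemma mul {A : Type*} [NormedRing A] [NormedAlgebra ℝ A] {p q : E → A}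
    (hp : IsPolyMap m p) (hq : IsPolyMap l q) : IsPolyMap (m + l) (fun x => p x * q x) :=
  hp.bilinear hq (ContinuousLinearMap.mul ℝ A)

protected lemma fderiv (hq : IsPolyMap (m + 1) q) : IsPolyMap m (fderiv ℝ q) := by
  refine ⟨hq.contDiff.fderiv_right le_rfl, ?_⟩
  ext1 x
  rw [Pi.zero_apply, ← norm_eq_zero, norm_iteratedFDeriv_fderiv, hq.iteratedFDeriv_succ,
    Pi.zero_apply, norm_zero]

protected lemma iteratedFDeriv (hq : IsPolyMap (m + j) q) :
    IsPolyMap m (iteratedFDeriv ℝ j q) := by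
  induction j generalizing m with
  | zero =>
    exact hq.clm_comp
      (continuousMultilinearCurryFin0 ℝ E F).symm.toContinuousLinearEquiv.toContinuousLinearMap
  | succ j ih =>
    rw [iteratedFDeriv_succ_eq_comp_left]
    exact (ih (by rwa [add_right_comm])).fderiv.clm_comp
      (continuousMultilinearCurryLeftEquiv ℝ (fun _ => E)
        F).symm.toContinuousLinearEquiv.toContinuousLinearMap

lemma multilinear_diag (A : E [×m]→L[ℝ] F) : IsPolyMap m (fun x => A fun _ => x) := by
  have hdiag : (fun x => A fun _ => x) = A ∘ (ContinuousLinearMap.pi fun _ : Fin m =>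
      ContinuousLinearMap.id ℝ E) := rfl
  refine ⟨hdiag ▸ A.contDiff.comp (ContinuousLinearMap.contDiff _), ?_⟩
  ext1 x
  have hA : iteratedFDeriv ℝ (m + 1) A = 0 := by
    ext1 y
    rw [A.iteratedFDeriv_eq, Pi.zero_apply, ← norm_le_zero_iff]
    simpa using A.norm_iteratedFDeriv_le' (m + 1) y
  rw [hdiag, ContinuousLinearMap.iteratedFDeriv_comp_right _ A.contDiff x le_rfl, hA]
  ext v
  simp

lemma continuousLinearMap (L : E →L[ℝ] F) : IsPolyMap 1 L :=
  multilinear_diag (ContinuousMultilinearMap.ofSubsingleton ℝ E F (0 : Fin 1) L)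

end IsPolyMap

end PolynomialMaps

section Taylor

variable {E F : Type*} [NormedAddCommGroup E] [NormedSpace ℝ E]
  [NormedAddCommGroup F] [NormedSpace ℝ F]

/-- The Taylor polynomial of `f` at `x` with `N` terms, hence of degree at most `N - 1`. -/
def taylorPoly (f : E → F) (N : ℕ) (x z : E) : F :=
  ∑ j ∈ Finset.range N, (j ! : ℝ)⁻¹ • iteratedFDeriv ℝ j f x fun _ => z - x

lemma taylorPoly_succ (f : E → F) (N : ℕ) (x z : E) : taylorPoly f (N + 1) x z =
    taylorPoly f N x z + (N ! : ℝ)⁻¹ • iteratedFDeriv ℝ N f x fun _ => z - x :=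
  Finset.sum_range_succ _ N

lemma taylorPoly_self (f : E → F) (N : ℕ) (x : E) : taylorPoly f (N + 1) x x = f x := by
  induction N with
  | zero => simp [taylorPoly]
  | succ N ih =>
    rw [taylorPoly_succ, ih, sub_self, ContinuousMultilinearMap.map_coord_zero _ 0 rfl, smul_zero,
      add_zero]

lemma isPolyMap_taylorPoly (f : E → F) (N : ℕ) (x : E) : IsPolyMap N (taylorPoly f (N + 1) x) :=
  IsPolyMap.sum fun _ hj =>
    (((IsPolyMap.multilinear_diag _).comp_sub_const x).const_smul _).mono
      (Finset.mem_range_succ_iff.1 hj)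

variable [CompleteSpace F] {f : E → F} {x v : E}

lemma norm_sub_taylorPoly_succ_sub_le {N : ℕ} (A : E [×(N + 1)]→L[ℝ] F) {B : ℝ}
    (hf : ∀ t ∈ Icc (0 : ℝ) 1, ContDiffAt ℝ (N + 1) f (x + t • v))
    (hB : ∀ t ∈ Icc (0 : ℝ) 1, ‖iteratedFDeriv ℝ (N + 1) f (x + t • v) - A‖ ≤ B) :
    ‖f (x + v) - taylorPoly f (N + 1) x (x + v) - ((N + 1)! : ℝ)⁻¹ • A fun _ => v‖ ≤
      B * ‖v‖ ^ (N + 1) := by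
  set D : ℝ → F := fun t => iteratedFDeriv ℝ (N + 1) f (x + t • v) fun _ => v
  have hD : ContinuousOn D (uIcc 0 1) := by
    rw [uIcc_of_le zero_le_one]
    intro t ht
    have hcont := ((hf t ht).iteratedFDeriv_right (m := 0) (i := N + 1) (by simp)).continuousAt
    exact ((hcont.comp (f := fun t : ℝ => x + t • v) (by fun_prop)).eval_const
      fun _ => v).continuousWithinAt
  have hA : ((N + 1)! : ℝ)⁻¹ • A (fun _ => v) =
      (N ! : ℝ)⁻¹ • ∫ t in (0 : ℝ)..1, (1 - t) ^ N • A fun _ => v := by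
    rw [intervalIntegral.integral_smul_const,
      intervalIntegral.integral_comp_sub_left (fun t => t ^ N) 1, integral_pow, smul_smul,
      Nat.factorial_succ]
    congr 1
    push_cast
    field_simp
    simp
  have hremainder : f (x + v) - taylorPoly f (N + 1) x (x + v) - ((N + 1)! : ℝ)⁻¹ • A (fun _ => v) =
      (N ! : ℝ)⁻¹ • ∫ t in (0 : ℝ)..1, (1 - t) ^ N • (D t - A fun _ => v) := by
    simp only [smul_sub (_ ^ N)]
    rw [intervalIntegral.integral_sub, smul_sub, ← hA,
      map_add_eq_sum_add_integral_iteratedFDeriv hf]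
    · simp [taylorPoly, D]
    · exact ((by fun_prop : ContinuousOn (fun t : ℝ => (1 - t) ^ N) _).smul hD).intervalIntegrable
    · exact (by fun_prop : Continuous _).intervalIntegrable _ _
  have hbound : ∀ t ∈ uIoc (0 : ℝ) 1, ‖(1 - t) ^ N • (D t - A fun _ => v)‖ ≤ B * ‖v‖ ^ (N + 1) := by
    intro t ht
    rw [uIoc_of_le zero_le_one] at ht
    have ht' : t ∈ Icc (0 : ℝ) 1 := Ioc_subset_Icc_self ht
    rw [norm_smul, norm_pow, Real.norm_of_nonneg (sub_nonneg.2 ht.2)]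
    refine (mul_le_of_le_one_left (norm_nonneg _)
      (pow_le_one₀ (sub_nonneg.2 ht.2) (sub_le_self _ ht'.1))).trans ?_
    exact ((iteratedFDeriv ℝ (N + 1) f (x + t • v) - A).le_opNorm_mul_pow_of_le
      (pi_norm_const_le v)).trans (mul_le_mul_of_nonneg_right (hB t ht') (by positivity))
  have hB0 : 0 ≤ B := (norm_nonneg _).trans (hB 0 ⟨le_rfl, zero_le_one⟩)
  rw [hremainder, norm_smul, Real.norm_of_nonneg (by positivity)]
  refine (mul_le_mul_of_nonneg_left (intervalIntegral.norm_integral_le_of_norm_le_const hbound)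
    (by positivity)).trans ?_
  rw [sub_zero, abs_one, mul_one]
  exact mul_le_of_le_one_left (by positivity)
    (inv_le_one_of_one_le₀ (by exact_mod_cast N.factorial_pos))

lemma norm_sub_taylorPoly_sub_le {N : ℕ} (A : E [×N]→L[ℝ] F) {B : ℝ}
    (hf : ∀ t ∈ Icc (0 : ℝ) 1, ContDiffAt ℝ N f (x + t • v))
    (hB : ∀ t ∈ Icc (0 : ℝ) 1, ‖iteratedFDeriv ℝ N f (x + t • v) - A‖ ≤ B) :
    ‖f (x + v) - taylorPoly f N x (x + v) - (N ! : ℝ)⁻¹ • A fun _ => v‖ ≤ B * ‖v‖ ^ N := by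
  cases N with
  | zero =>
    have h := (iteratedFDeriv ℝ 0 f (x + (1 : ℝ) • v) - A).le_of_opNorm_le
      (hB 1 (right_mem_Icc.2 zero_le_one)) fun _ => v
    simpa [taylorPoly] using h
  | succ N => exact norm_sub_taylorPoly_succ_sub_le A (by exact_mod_cast hf) hB

lemma norm_sub_taylorPoly_le {N : ℕ} {B : ℝ}
    (hf : ∀ t ∈ Icc (0 : ℝ) 1, ContDiffAt ℝ N f (x + t • v))
    (hB : ∀ t ∈ Icc (0 : ℝ) 1, ‖iteratedFDeriv ℝ N f (x + t • v)‖ ≤ B) :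
    ‖f (x + v) - taylorPoly f N x (x + v)‖ ≤ B * ‖v‖ ^ N := by
  simpa using norm_sub_taylorPoly_sub_le 0 hf (by simpa using hB)

lemma norm_sub_taylorPoly_succ_le {N : ℕ} {B : ℝ}
    (hf : ∀ t ∈ Icc (0 : ℝ) 1, ContDiffAt ℝ N f (x + t • v))
    (hB : ∀ t ∈ Icc (0 : ℝ) 1,
      ‖iteratedFDeriv ℝ N f (x + t • v) - iteratedFDeriv ℝ N f x‖ ≤ B) :
    ‖f (x + v) - taylorPoly f (N + 1) x (x + v)‖ ≤ B * ‖v‖ ^ N := by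
  simpa [taylorPoly_succ, sub_sub] using norm_sub_taylorPoly_sub_le _ hf hB

lemma IsPolyMap.taylorPoly_eq {m : ℕ} {q : E → F} (hq : IsPolyMap m q) (x z : E) :
    taylorPoly q (m + 1) x z = q z := by
  have h := norm_sub_taylorPoly_le (f := q) (x := x) (v := z - x) (N := m + 1) (B := 0)
    (fun _ _ => (hq.contDiff_nat _).contDiffAt) (by simp [hq.iteratedFDeriv_succ])
  rw [zero_mul, norm_le_zero_iff, sub_eq_zero, add_sub_cancel] at h
  exact h.symm

lemma IsPolyMap.iteratedFDeriv_eq {m : ℕ} {q : E → F} (hq : IsPolyMap m q) (x y : E) :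
    iteratedFDeriv ℝ m q x = iteratedFDeriv ℝ m q y := by
  have h : IsPolyMap 0 (iteratedFDeriv ℝ m q) := IsPolyMap.iteratedFDeriv (by rwa [zero_add])
  simpa [taylorPoly] using (h.taylorPoly_eq x y)

end Taylor

section BernsteinInequality

universe u

-- The coefficients are recovered from the values at the nodes `l / (m + 1)` by the inverse of the
-- Vandermonde matrix.
lemma exists_norm_coeff_le (m : ℕ) : ∃ C > 0, ∀ {F : Type u} [NormedAddCommGroup F]
    [NormedSpace ℝ F] {c : ℕ → F} {A : ℝ},
    (∀ t ∈ Icc (0 : ℝ) 1, ‖∑ j ∈ Finset.range (m + 1), t ^ j • c j‖ ≤ A) →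
    ∀ i ≤ m, ‖c i‖ ≤ C * A := by
  set node : Fin (m + 1) → ℝ := fun l => l / (m + 1)
  set V := Matrix.vandermonde node
  have hnode : ∀ l, node l ∈ Icc (0 : ℝ) 1 := fun l =>
    ⟨by positivity, div_le_one_of_le₀ (by exact_mod_cast l.is_lt.le) (by positivity)⟩
  have hV : IsUnit V.det := by
    refine (Matrix.det_vandermonde_ne_zero_iff.2 fun a b hab => ?_).isUnit
    exact Fin.ext (by exact_mod_cast (div_left_inj' (by positivity : (m + 1 : ℝ) ≠ 0)).1 hab)
  refine ⟨1 + ∑ i, ∑ l, |V⁻¹ i l|, by positivity, fun {F} _ _ {c A} hA i hi => ?_⟩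
  have hA0 : 0 ≤ A := (norm_nonneg _).trans (hA 0 ⟨le_rfl, zero_le_one⟩)
  set i' : Fin (m + 1) := ⟨i, Nat.lt_succ_of_le hi⟩
  have hc : c i = ∑ l, V⁻¹ i' l • ∑ j : Fin (m + 1), V l j • c j := by
    simp only [Finset.smul_sum, smul_smul]
    rw [Finset.sum_comm]
    simp only [← Finset.sum_smul, ← Matrix.mul_apply, Matrix.nonsing_inv_mul V hV,
      Matrix.one_apply, ite_smul, one_smul, zero_smul, Finset.sum_ite_eq, Finset.mem_univ, if_true,
      i']
  calc ‖c i‖ ≤ ∑ l, |V⁻¹ i' l| * A := by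
        rw [hc]
        refine norm_sum_le_of_le _ fun l _ => ?_
        rw [norm_smul, Real.norm_eq_abs]
        refine mul_le_mul_of_nonneg_left ?_ (abs_nonneg _)
        simpa only [V, Matrix.vandermonde_apply, Finset.sum_range] using hA _ (hnode l)
    _ = (∑ l, |V⁻¹ i' l|) * A := (Finset.sum_mul ..).symm
    _ ≤ (1 + ∑ i, ∑ l, |V⁻¹ i l|) * A := by
        refine mul_le_mul_of_nonneg_right ?_ hA0
        have := Finset.single_le_sum (f := fun i => ∑ l, |V⁻¹ i l|)
          (fun i _ => by positivity) (Finset.mem_univ i')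
        linarith

variable {E : Type u} [NormedAddCommGroup E] [NormedSpace ℝ E]

namespace IsPolyMap

lemma exists_norm_iteratedFDeriv_diag_le (m : ℕ) : ∃ C > 0, ∀ {F : Type u}
    [NormedAddCommGroup F] [NormedSpace ℝ F] [CompleteSpace F] {q : E → F}, IsPolyMap m q →
    ∀ {c : E} {r A : ℝ}, (∀ z ∈ ball c r, ‖q z‖ ≤ A) → ∀ v, ‖v‖ < r → ∀ j ≤ m,
    ‖(j ! : ℝ)⁻¹ • iteratedFDeriv ℝ j q c fun _ => v‖ ≤ C * A := by
  obtain ⟨C, hC, hcoeff⟩ := exists_norm_coeff_le.{u} m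
  refine ⟨C, hC, fun {F} _ _ _ {q} hq {c r A} hA v hv => hcoeff fun t ht => ?_⟩
  have hmem : c + t • v ∈ ball c r := by
    rw [mem_ball, dist_self_add_left, norm_smul, Real.norm_of_nonneg ht.1]
    exact (mul_le_of_le_one_left (norm_nonneg v) ht.2).trans_lt hv
  convert hA _ hmem using 2
  rw [← hq.taylorPoly_eq c, taylorPoly]
  refine Finset.sum_congr rfl fun j _ => ?_
  rw [add_sub_cancel_left, smul_comm,
    (iteratedFDeriv ℝ j q c).map_smul_univ (fun _ => t) (fun _ => v), Fin.prod_const]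

lemma exists_norm_le_of_norm_le_on_ball (m : ℕ) : ∃ C > 0, ∀ {F : Type u}
    [NormedAddCommGroup F] [NormedSpace ℝ F] [CompleteSpace F] {q : E → F}, IsPolyMap m q →
    ∀ {c : E} {r A : ℝ}, (∀ z ∈ ball c r, ‖q z‖ ≤ A) → ∀ z ∈ ball c (2 * r), ‖q z‖ ≤ C * A := by
  obtain ⟨C, hC, hdiag⟩ := exists_norm_iteratedFDeriv_diag_le (E := E) m
  refine ⟨∑ j ∈ Finset.range (m + 1), 2 ^ j * C, Finset.sum_pos (fun _ _ => by positivity)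
    (by simp), fun {F} _ _ _ {q} hq {c r A} hA z hz => ?_⟩
  set v : E := (2 : ℝ)⁻¹ • (z - c)
  have hv : ‖v‖ < r := by
    rw [norm_smul, Real.norm_of_nonneg (by norm_num), ← dist_eq_norm]
    linarith [mem_ball.1 hz]
  have hzv : z - c = (2 : ℝ) • v := (smul_inv_smul₀ two_ne_zero _).symm
  rw [← hq.taylorPoly_eq c, taylorPoly, Finset.sum_mul]
  refine norm_sum_le_of_le _ fun j hj => ?_
  rw [hzv, (iteratedFDeriv ℝ j q c).map_smul_univ (fun _ => (2 : ℝ)) (fun _ => v), Fin.prod_const,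
    smul_comm, norm_smul, norm_pow, Real.norm_ofNat, mul_assoc]
  gcongr
  exact hdiag hq hA v hv j (Finset.mem_range_succ_iff.1 hj)

lemma exists_norm_fderiv_le (m : ℕ) : ∃ C > 0, ∀ {F : Type u} [NormedAddCommGroup F]
    [NormedSpace ℝ F] [CompleteSpace F] {q : E → F}, IsPolyMap m q → ∀ {c : E} {r A : ℝ}, 0 < r →
    (∀ z ∈ ball c r, ‖q z‖ ≤ A) → ∀ w ∈ closedBall c r, ‖fderiv ℝ q w‖ ≤ C * A / r := by
  obtain ⟨C, hC, hdiag⟩ := exists_norm_iteratedFDeriv_diag_le (E := E) (m + 1)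
  obtain ⟨C', hC', hgrow⟩ := exists_norm_le_of_norm_le_on_ball (E := E) m
  refine ⟨2 * C * C', by positivity, fun {F} _ _ _ {q} hq {c r A} hr hA w hw => ?_⟩
  have hA0 : 0 ≤ A := (norm_nonneg _).trans (hA c (mem_ball_self hr))
  have hball : ∀ z ∈ ball w r, ‖q z‖ ≤ C' * A := fun z hz => by
    refine hgrow hq hA z (ball_subset_ball' ?_ hz)
    linarith [mem_closedBall.1 hw]
  refine ContinuousLinearMap.opNorm_le_bound _ (by positivity) fun v => ?_
  rcases eq_or_ne v 0 with rfl | hv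
  · simp
  have : 0 < ‖v‖ := norm_pos_iff.2 hv
  set s : ℝ := r / (2 * ‖v‖)
  have hs : 0 < s := by positivity
  have hsv : ‖s • v‖ < r := by
    rw [norm_smul, Real.norm_of_nonneg hs.le]
    simp only [s]
    field_simp
    norm_num
  have h := hdiag (hq.mono m.le_succ) hball (s • v) hsv 1 (by omega)
  rw [Nat.factorial_one, Nat.cast_one, inv_one, one_smul, iteratedFDeriv_one_apply, map_smul,
    norm_smul, Real.norm_of_nonneg hs.le, ← le_div_iff₀' hs] at h
  refine h.trans_eq ?_
  simp only [s]
  field_simp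

/-- **Bernstein–Markov inequality** for polynomial maps on a ball. -/
lemma exists_norm_iteratedFDeriv_le (j m : ℕ) : ∃ C > 0, ∀ {F : Type u} [NormedAddCommGroup F]
    [NormedSpace ℝ F] [CompleteSpace F] {q : E → F}, IsPolyMap m q → ∀ {c : E} {r A : ℝ}, 0 < r →
    (∀ z ∈ ball c r, ‖q z‖ ≤ A) → ∀ w ∈ closedBall c r,
    ‖iteratedFDeriv ℝ j q w‖ ≤ C * A / r ^ j := by
  induction j with
  | zero =>
    obtain ⟨C, hC, hgrow⟩ := exists_norm_le_of_norm_le_on_ball (E := E) m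
    refine ⟨C, hC, fun {F} _ _ _ {q} hq {c r A} hr hA w hw => ?_⟩
    rw [norm_iteratedFDeriv_zero, pow_zero, div_one]
    exact hgrow hq hA w (closedBall_subset_ball (by linarith) hw)
  | succ j ih =>
    obtain ⟨C, hC, hiter⟩ := ih
    obtain ⟨C', hC', hfderiv⟩ := exists_norm_fderiv_le (E := E) m
    refine ⟨C * C', by positivity, fun {F} _ _ _ {q} hq {c r A} hr hA w hw => ?_⟩
    rw [← norm_iteratedFDeriv_fderiv]
    refine (hiter (hq.mono m.le_succ).fderiv hr (fun z hz =>
      hfderiv hq hr hA z (ball_subset_closedBall hz)) w hw).trans_eq ?_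
    rw [pow_succ]
    field_simp

end IsPolyMap

end BernsteinInequality

section ConverseTaylor

universe u

variable {E : Type u} [NormedAddCommGroup E] [NormedSpace ℝ E]

lemma exists_ball_subset_ball_of_mem {a y : E} {R ρ : ℝ} (hρ : 0 ≤ ρ) (hρR : ρ ≤ R)
    (hy : y ∈ ball a R) : ∃ c, y ∈ closedBall c ρ ∧ ball c ρ ⊆ ball a R := by
  have hR : 0 < R := dist_nonneg.trans_lt hy
  have hya : dist y a ≤ R := (mem_ball.1 hy).le
  have hmul : ρ / R * R = ρ := div_mul_cancel₀ _ hR.ne'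
  refine ⟨AffineMap.lineMap y a (ρ / R), ?_, ball_subset_ball' ?_⟩
  · rw [mem_closedBall, dist_left_lineMap, Real.norm_of_nonneg (by positivity)]
    exact (mul_le_mul_of_nonneg_left hya (by positivity)).trans_eq hmul
  · have h : 0 ≤ 1 - ρ / R := sub_nonneg.2 ((div_le_one hR).2 hρR)
    rw [dist_lineMap_right, Real.norm_of_nonneg h]
    nlinarith

lemma tendsto_mul_norm_sub_rpow_nhdsWithin {E : Type*} [SeminormedAddCommGroup E] {β : ℝ}
    (hβ : 0 < β) (C : ℝ) (s : Set E) (x : E) :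
    Tendsto (fun y => C * ‖y - x‖ ^ β) (𝓝[s] x) (𝓝 0) := by
  have h : ContinuousAt (fun y => C * ‖y - x‖ ^ β) x :=
    continuousAt_const.mul (ContinuousAt.rpow_const (by fun_prop) (Or.inr hβ.le))
  simpa [ContinuousAt, Real.zero_rpow hβ.ne'] using h.tendsto.mono_left nhdsWithin_le_nhds

lemma hasFDerivWithinAt_zero_of_norm_le_rpow {F : Type*} [NormedAddCommGroup F] [NormedSpace ℝ F]
    {e : E → F} {s : Set E} {x : E} {C β : ℝ} (hβ : 1 < β) (hx : x ∈ s)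
    (he : ∀ y ∈ s, ‖e y‖ ≤ C * ‖y - x‖ ^ β) : HasFDerivWithinAt e (0 : E →L[ℝ] F) s x := by
  have hex : e x = 0 := by simpa [Real.zero_rpow (by linarith : β ≠ 0)] using he x hx
  rw [hasFDerivWithinAt_iff_isLittleO, Asymptotics.isLittleO_iff]
  intro c hc
  filter_upwards [(tendsto_mul_norm_sub_rpow_nhdsWithin (sub_pos.2 hβ) C s
    x).eventually_le_const hc, self_mem_nhdsWithin] with y hyc hys
  rw [hex, sub_zero, zero_apply, sub_zero]
  calc ‖e y‖ ≤ C * ‖y - x‖ ^ (β - 1 + 1) := by rw [sub_add_cancel]; exact he y hys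
    _ = C * ‖y - x‖ ^ (β - 1) * ‖y - x‖ := by
      rw [Real.rpow_add_one' (norm_nonneg _) (by linarith), mul_assoc]
    _ ≤ c * ‖y - x‖ := by gcongr

variable {F : Type u} [NormedAddCommGroup F] [NormedSpace ℝ F]

/-- At each point `x` of `s`, the polynomial map `P x` of degree at most `m` approximates `u` on `s`
to order `β` with constant `A`. -/
structure HasPolyApproxOn (m : ℕ) (β A : ℝ) (u : E → F) (P : E → E → F) (s : Set E) : Prop where
  isPolyMap : ∀ x ∈ s, IsPolyMap m (P x)
  norm_sub_le : ∀ x ∈ s, ∀ z ∈ s, ‖u z - P x z‖ ≤ A * ‖z - x‖ ^ β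

namespace HasPolyApproxOn

variable {m j : ℕ} {β A : ℝ} {u : E → F} {P : E → E → F} {s : Set E}

lemma eq_self (h : HasPolyApproxOn m β A u P s) (hβ : 0 < β) {x : E} (hx : x ∈ s) :
    u x = P x x := by
  simpa [Real.zero_rpow hβ.ne', sub_eq_zero] using h.norm_sub_le x hx x hx

lemma norm_sub_le_on_ball (h : HasPolyApproxOn m β A u P s) (hβ : 0 ≤ β) (hA : 0 ≤ A) {x y c : E}
    (hx : x ∈ s) (hy : y ∈ s) (hc : ball c (dist x y / 2) ⊆ s)
    (hyc : y ∈ closedBall c (dist x y / 2)) :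
    ∀ z ∈ ball c (dist x y / 2), ‖P x z - P y z‖ ≤ (2 ^ β + 1) * A * ‖x - y‖ ^ β := by
  intro z hz
  have hzy : ‖z - y‖ ≤ ‖x - y‖ := by
    rw [← dist_eq_norm, ← dist_eq_norm]
    linarith [dist_triangle_right z y c, mem_ball.1 hz, mem_closedBall.1 hyc]
  have hzx : ‖z - x‖ ≤ 2 * ‖x - y‖ := by
    linarith [norm_sub_le_norm_sub_add_norm_sub z y x, norm_sub_rev x y]
  calc ‖P x z - P y z‖ = ‖(u z - P y z) - (u z - P x z)‖ := by rw [sub_sub_sub_cancel_left]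
    _ ≤ ‖u z - P y z‖ + ‖u z - P x z‖ := _root_.norm_sub_le _ _
    _ ≤ A * ‖x - y‖ ^ β + A * (2 * ‖x - y‖) ^ β := by
      refine add_le_add ((h.norm_sub_le y hy z (hc hz)).trans ?_)
        ((h.norm_sub_le x hx z (hc hz)).trans ?_) <;> gcongr
    _ = (2 ^ β + 1) * A * ‖x - y‖ ^ β := by
      rw [Real.mul_rpow zero_le_two (norm_nonneg _)]
      ring

lemma exists_norm_iteratedFDeriv_poly_sub_le (m j : ℕ) {β : ℝ} (hβ : 0 ≤ β) :
    ∃ C > 0, ∀ {F : Type u} [NormedAddCommGroup F] [NormedSpace ℝ F] [CompleteSpace F] {A : ℝ}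
      {u : E → F} {P : E → E → F} {a : E} {R : ℝ}, HasPolyApproxOn m β A u P (ball a R) → 0 ≤ A →
      ∀ x ∈ ball a R, ∀ y ∈ ball a R,
        ‖iteratedFDeriv ℝ j (P x) y - iteratedFDeriv ℝ j (P y) y‖ ≤
          C * A * ‖x - y‖ ^ (β - j) := by
  obtain ⟨C, hC, hbernstein⟩ := IsPolyMap.exists_norm_iteratedFDeriv_le (E := E) j m
  refine ⟨C * (2 ^ β + 1) * 2 ^ j, by positivity,
    fun {F} _ _ _ {A u P a R} h hA x hx y hy => ?_⟩
  rcases eq_or_ne x y with rfl | hxy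
  · rw [sub_self, norm_zero]
    positivity
  have hpos : 0 < ‖x - y‖ := norm_pos_iff.2 (sub_ne_zero.2 hxy)
  have hr : dist x y / 2 ≤ R := by
    linarith [dist_triangle_right x y a, mem_ball.1 hx, mem_ball.1 hy]
  obtain ⟨c, hyc, hc⟩ := exists_ball_subset_ball_of_mem (by positivity) hr hy
  have hx' := h.isPolyMap x hx
  have hy' := h.isPolyMap y hy
  have hdiff := hbernstein (hx'.sub hy') (half_pos (dist_pos.2 hxy))
    (h.norm_sub_le_on_ball hβ hA hx hy hc hyc) y hyc
  have hsub : iteratedFDeriv ℝ j (fun z => P x z - P y z) y =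
      iteratedFDeriv ℝ j (P x) y - iteratedFDeriv ℝ j (P y) y :=
    iteratedFDeriv_sub_apply (hx'.contDiff_nat j).contDiffAt (hy'.contDiff_nat j).contDiffAt
  rw [hsub] at hdiff
  refine hdiff.trans_eq ?_
  rw [Real.rpow_sub hpos, Real.rpow_natCast, dist_eq_norm, div_pow]
  field_simp

lemma hasFDerivWithinAt_jet (h : HasPolyApproxOn m β A u P s) {C : ℝ} {x : E} (hx : x ∈ s)
    (hj : j + 1 < β) (hC : ∀ y ∈ s,
      ‖iteratedFDeriv ℝ j (P y) y - iteratedFDeriv ℝ j (P x) y‖ ≤ C * ‖y - x‖ ^ (β - j)) :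
    HasFDerivWithinAt (fun y => iteratedFDeriv ℝ j (P y) y)
      (iteratedFDeriv ℝ (j + 1) (P x) x).curryLeft s x := by
  have hfixed : HasFDerivAt (iteratedFDeriv ℝ j (P x))
      (iteratedFDeriv ℝ (j + 1) (P x) x).curryLeft x := by
    have hdiff := ((h.isPolyMap x hx).contDiff.differentiable_iteratedFDeriv
      (m := j) (by exact_mod_cast ENat.natCast_lt_top j) x).hasFDerivAt
    rwa [fderiv_iteratedFDeriv] at hdiff
  have herror := hasFDerivWithinAt_zero_of_norm_le_rpow (by linarith) hx hC
  simpa [Pi.add_def] using hfixed.hasFDerivWithinAt.add herror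

lemma exists_norm_iteratedFDeriv_jet_sub_le (m : ℕ) {α : ℝ} (hα : 0 ≤ α) :
    ∃ C > 0, ∀ {F : Type u} [NormedAddCommGroup F] [NormedSpace ℝ F] [CompleteSpace F] {A : ℝ}
      {u : E → F} {P : E → E → F} {a : E} {R : ℝ}, HasPolyApproxOn m (m + α) A u P (ball a R) →
      0 ≤ A → ∀ x ∈ ball a R, ∀ y ∈ ball a R,
        ‖iteratedFDeriv ℝ m (P x) x - iteratedFDeriv ℝ m (P y) y‖ ≤ C * A * ‖x - y‖ ^ α := by
  obtain ⟨C, hC, hbound⟩ := exists_norm_iteratedFDeriv_poly_sub_le (E := E) m m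
    (by positivity : 0 ≤ m + α)
  refine ⟨C, hC, fun {F} _ _ _ {A u P a R} h hA x hx y hy => ?_⟩
  rw [(h.isPolyMap x hx).iteratedFDeriv_eq x y]
  simpa using hbound h hA x hx y hy

variable [CompleteSpace F] {a : E} {R α : ℝ}

lemma hasFTaylorSeriesUpToOn (h : HasPolyApproxOn m (m + α) A u P (ball a R)) (hα : 0 < α)
    (hA : 0 ≤ A) :
    HasFTaylorSeriesUpToOn m u (fun x j => iteratedFDeriv ℝ j (P x) x) (ball a R) := by
  have hderiv : ∀ j < m, ∀ x ∈ ball a R, HasFDerivWithinAt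
      (fun y => iteratedFDeriv ℝ j (P y) y) (iteratedFDeriv ℝ (j + 1) (P x) x).curryLeft
      (ball a R) x := fun j hj x hx => by
    obtain ⟨C, -, hC⟩ := exists_norm_iteratedFDeriv_poly_sub_le (E := E) m j
      (by positivity : 0 ≤ m + α)
    have hj' : (j + 1 : ℝ) ≤ m := by exact_mod_cast hj
    exact h.hasFDerivWithinAt_jet hx (by linarith) fun y hy => by
      rw [norm_sub_rev, norm_sub_rev y]
      exact hC h hA x hx y hy
  refine ⟨fun x hx => ?_, fun j hj x hx => hderiv j (by exact_mod_cast hj) x hx,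
    fun j hj x hx => ?_⟩
  · rw [ContinuousMultilinearMap.curry0_apply, iteratedFDeriv_zero_apply]
    exact (h.eq_self (by positivity) hx).symm
  · have hj' : j ≤ m := by exact_mod_cast hj
    obtain hlt | rfl := hj'.lt_or_eq
    · exact (hderiv j hlt x hx).continuousWithinAt
    · obtain ⟨C, -, hC⟩ := exists_norm_iteratedFDeriv_jet_sub_le (E := E) j hα.le
      rw [ContinuousWithinAt, tendsto_iff_norm_sub_tendsto_zero]
      refine squeeze_zero' (Eventually.of_forall fun _ => norm_nonneg _) ?_
        (tendsto_mul_norm_sub_rpow_nhdsWithin hα (C * A) (ball a R) x)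
      filter_upwards [self_mem_nhdsWithin] with y hy using hC h hA y hy x hx

lemma contDiffOn (h : HasPolyApproxOn m (m + α) A u P (ball a R)) (hα : 0 < α) (hA : 0 ≤ A) :
    ContDiffOn ℝ m u (ball a R) :=
  (h.hasFTaylorSeriesUpToOn hα hA).contDiffOn

lemma iteratedFDeriv_eq (h : HasPolyApproxOn m (m + α) A u P (ball a R)) (hα : 0 < α) (hA : 0 ≤ A)
    {x : E} (hx : x ∈ ball a R) : iteratedFDeriv ℝ m u x = iteratedFDeriv ℝ m (P x) x :=
  ((h.hasFTaylorSeriesUpToOn hα hA).eq_iteratedFDerivWithin_of_uniqueDiffOn le_rfl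
    isOpen_ball.uniqueDiffOn hx).trans (iteratedFDerivWithin_of_isOpen m isOpen_ball hx) |>.symm

lemma exists_norm_iteratedFDeriv_sub_le (m : ℕ) {α : ℝ} (hα : 0 < α) :
    ∃ C > 0, ∀ {F : Type u} [NormedAddCommGroup F] [NormedSpace ℝ F] [CompleteSpace F] {A : ℝ}
      {u : E → F} {P : E → E → F} {a : E} {R : ℝ}, HasPolyApproxOn m (m + α) A u P (ball a R) →
      0 ≤ A → ∀ x ∈ ball a R, ∀ y ∈ ball a R,
        ‖iteratedFDeriv ℝ m u x - iteratedFDeriv ℝ m u y‖ ≤ C * A * ‖x - y‖ ^ α := by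
  obtain ⟨C, hC, hbound⟩ := exists_norm_iteratedFDeriv_jet_sub_le (E := E) m hα.le
  refine ⟨C, hC, fun {F} _ _ _ {A u P a R} h hA x hx y hy => ?_⟩
  rw [h.iteratedFDeriv_eq hα hA hx, h.iteratedFDeriv_eq hα hA hy]
  exact hbound h hA x hx y hy

lemma exists_norm_iteratedFDeriv_le (m : ℕ) {α : ℝ} (hα : 0 < α) :
    ∃ C > 0, ∀ {F : Type u} [NormedAddCommGroup F] [NormedSpace ℝ F] [CompleteSpace F] {A B : ℝ}
      {u Q : E → F} {P : E → E → F} {a : E} {R : ℝ} {l : ℕ},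
      HasPolyApproxOn m (m + α) A u P (ball a R) → 0 ≤ A → IsPolyMap l Q → l < m →
      (∀ z ∈ ball a R, ‖u z - Q z‖ ≤ B) → ∀ x ∈ ball a R,
        ‖iteratedFDeriv ℝ m u x‖ ≤ C * (B + A * R ^ (m + α)) / R ^ m := by
  obtain ⟨C, hC, hbernstein⟩ := IsPolyMap.exists_norm_iteratedFDeriv_le (E := E) m m
  refine ⟨C * 2 ^ (m + α), by positivity,
    fun {F} _ _ _ {A B u Q P a R l} h hA hQ hl hB x hx => ?_⟩
  have hR : 0 < R := dist_nonneg.trans_lt (mem_ball.1 hx)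
  have hB₀ : 0 ≤ B := (norm_nonneg _).trans (hB x hx)
  have hPx := h.isPolyMap x hx
  have hPQ : ∀ z ∈ ball a R, ‖P x z - Q z‖ ≤ 2 ^ (m + α) * (B + A * R ^ (m + α)) := fun z hz => by
    have hzx : ‖z - x‖ ≤ 2 * R := by
      rw [← dist_eq_norm]
      linarith [dist_triangle_right z x a, mem_ball.1 hz, mem_ball.1 hx]
    calc ‖P x z - Q z‖ ≤ ‖u z - Q z‖ + ‖u z - P x z‖ := by
          rw [← sub_sub_sub_cancel_left (Q z) (P x z) (u z)]
          exact _root_.norm_sub_le _ _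
      _ ≤ B + A * (2 * R) ^ (m + α) := by
          refine add_le_add (hB z hz) ((h.norm_sub_le x hx z hz).trans ?_)
          gcongr
      _ ≤ 2 ^ (m + α) * (B + A * R ^ (m + α)) := by
          rw [Real.mul_rpow zero_le_two hR.le, mul_add]
          refine add_le_add (le_mul_of_one_le_left hB₀ ?_) (mul_left_comm _ _ _).le
          exact Real.one_le_rpow one_le_two (by positivity)
  have hQzero : iteratedFDeriv ℝ m (P x - Q) x = iteratedFDeriv ℝ m (P x) x := by
    rw [iteratedFDeriv_sub_apply (hPx.contDiff_nat m).contDiffAt (hQ.contDiff_nat m).contDiffAt,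
      hQ.iteratedFDeriv_eq_zero hl, Pi.zero_apply, sub_zero]
  rw [h.iteratedFDeriv_eq hα hA hx, ← hQzero, mul_assoc C]
  exact hbernstein (hPx.sub (hQ.mono hl.le)) hR hPQ x (ball_subset_closedBall hx)

end HasPolyApproxOn

end ConverseTaylor

section RieszKernel

/-- The Riesz kernel of exponent `p`, without normalising constant. -/
def rieszKernel {E : Type*} [NormedAddCommGroup E] (p : ℝ) (x : E) : ℝ :=
  ‖x‖ ^ p

lemma rieszKernel_nonneg {E : Type*} [NormedAddCommGroup E] (p : ℝ) (x : E) :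
    0 ≤ rieszKernel p x :=
  Real.rpow_nonneg (norm_nonneg x) p

variable {E : Type*} [NormedAddCommGroup E] [InnerProductSpace ℝ E] {p : ℝ} {ξ : E}

lemma contDiffAt_rieszKernel (hξ : ξ ≠ 0) (n : WithTop ℕ∞) : ContDiffAt ℝ n (rieszKernel p) ξ :=
  (contDiffAt_id.norm ℝ hξ).rpow_const_of_ne (norm_ne_zero_iff.2 hξ)

lemma continuousOn_iteratedFDeriv_rieszKernel (p : ℝ) (j : ℕ) :
    ContinuousOn (iteratedFDeriv ℝ j (rieszKernel p)) {(0 : E)}ᶜ := by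
  have h : ContDiffOn ℝ j (rieszKernel p) {(0 : E)}ᶜ := fun _ hx =>
    (contDiffAt_rieszKernel hx j).contDiffWithinAt
  exact (h.continuousOn_iteratedFDerivWithin le_rfl isOpen_compl_singleton.uniqueDiffOn).congr
    fun _ hx => (iteratedFDerivWithin_of_isOpen j isOpen_compl_singleton hx).symm

lemma iteratedFDeriv_comp_smul {F G : Type*} [NormedAddCommGroup F] [NormedSpace ℝ F]
    [NormedAddCommGroup G] [NormedSpace ℝ G] {c : ℝ} (hc : c ≠ 0) (f : F → G) (j : ℕ) (x : F) :
    iteratedFDeriv ℝ j (fun y => f (c • y)) x = c ^ j • iteratedFDeriv ℝ j f (c • x) := by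
  have h := (ContinuousLinearEquiv.smulLeft (R₁ := ℝ) (M₁ := F)
    (Units.mk0 c hc)).iteratedFDerivWithin_comp_right f
    uniqueDiffOn_univ (x := x) (mem_univ _) j
  simp only [preimage_univ, iteratedFDerivWithin_univ] at h
  ext v
  exact (DFunLike.congr_fun h v).trans (by
    simpa using (iteratedFDeriv ℝ j f (c • x)).map_smul_univ (fun _ => c) v)

lemma iteratedFDeriv_rieszKernel_smul {c : ℝ} (hc : 0 < c) (hξ : ξ ≠ 0) (j : ℕ) :
    iteratedFDeriv ℝ j (rieszKernel p) (c • ξ) =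
      c ^ (p - j) • iteratedFDeriv ℝ j (rieszKernel p) ξ := by
  have hhom : (fun x : E => rieszKernel p (c • x)) = c ^ p • rieszKernel p := by
    ext x
    rw [Pi.smul_apply, rieszKernel, norm_smul, Real.norm_of_nonneg hc.le,
      Real.mul_rpow hc.le (norm_nonneg x), smul_eq_mul, rieszKernel]
  have h := iteratedFDeriv_comp_smul hc.ne' (rieszKernel p) j ξ
  rw [hhom, iteratedFDeriv_const_smul_apply (contDiffAt_rieszKernel hξ j)] at h
  rw [Real.rpow_sub hc, Real.rpow_natCast, div_eq_inv_mul, mul_smul, h,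
    inv_smul_smul₀ (pow_ne_zero j hc.ne')]

lemma exists_norm_iteratedFDeriv_rieszKernel_le [FiniteDimensional ℝ E] (p : ℝ) (j : ℕ) :
    ∃ C > 0, ∀ ξ : E, ξ ≠ 0 → ‖iteratedFDeriv ℝ j (rieszKernel p) ξ‖ ≤ C * ‖ξ‖ ^ (p - j) := by
  have hsphere : sphere (0 : E) 1 ⊆ {0}ᶜ := fun x hx => ne_zero_of_mem_unit_sphere ⟨x, hx⟩
  obtain ⟨C, hC⟩ := (isCompact_sphere (0 : E) 1).exists_bound_of_continuousOn
    ((continuousOn_iteratedFDeriv_rieszKernel p j).mono hsphere)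
  refine ⟨max C 1, by positivity, fun ξ hξ => ?_⟩
  have hpos : 0 < ‖ξ‖ := norm_pos_iff.2 hξ
  have hunit : ‖ξ‖⁻¹ • ξ ∈ sphere (0 : E) 1 := by
    simp [norm_smul, hpos.ne']
  calc ‖iteratedFDeriv ℝ j (rieszKernel p) ξ‖
      = ‖iteratedFDeriv ℝ j (rieszKernel p) (‖ξ‖ • ‖ξ‖⁻¹ • ξ)‖ := by
        rw [smul_inv_smul₀ hpos.ne']
    _ = ‖ξ‖ ^ (p - j) * ‖iteratedFDeriv ℝ j (rieszKernel p) (‖ξ‖⁻¹ • ξ)‖ := by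
        rw [iteratedFDeriv_rieszKernel_smul hpos (hsphere hunit), norm_smul,
          Real.norm_of_nonneg (by positivity)]
    _ ≤ max C 1 * ‖ξ‖ ^ (p - j) := by
        rw [mul_comm]
        exact mul_le_mul_of_nonneg_right ((hC _ hunit).trans (le_max_left C 1)) (by positivity)

lemma exists_abs_rieszKernel_sub_taylorPoly_le [FiniteDimensional ℝ E] {N : ℕ} (hp : p ≤ N) :
    ∃ C > 0, ∀ ξ h : E, ξ ≠ 0 → 2 * ‖h‖ ≤ ‖ξ‖ →
      |rieszKernel p (ξ + h) - taylorPoly (rieszKernel p) N ξ (ξ + h)| ≤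
        C * ‖ξ‖ ^ (p - N) * ‖h‖ ^ N := by
  obtain ⟨C, hC, hderiv⟩ := exists_norm_iteratedFDeriv_rieszKernel_le (E := E) p N
  refine ⟨C * (1 / 2) ^ (p - N), by positivity, fun ξ h hξ hh => ?_⟩
  have hpos : 0 < ‖ξ‖ := norm_pos_iff.2 hξ
  have hseg : ∀ t ∈ Icc (0 : ℝ) 1, 1 / 2 * ‖ξ‖ ≤ ‖ξ + t • h‖ := fun t ht => by
    have hth : ‖t • h‖ ≤ ‖h‖ := by
      rw [norm_smul, Real.norm_of_nonneg ht.1]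
      exact mul_le_of_le_one_left (norm_nonneg h) ht.2
    linarith [norm_sub_le_norm_add ξ (t • h)]
  have hne : ∀ t ∈ Icc (0 : ℝ) 1, ξ + t • h ≠ 0 := fun t ht =>
    norm_pos_iff.1 (by linarith [hseg t ht])
  refine norm_sub_taylorPoly_le (fun t ht => contDiffAt_rieszKernel (hne t ht) N) fun t ht =>
    (hderiv _ (hne t ht)).trans ?_
  rw [mul_assoc, ← Real.mul_rpow one_half_pos.le hpos.le]
  gcongr ?_ * ?_
  exact Real.rpow_le_rpow_of_nonpos (by positivity) (hseg t ht) (sub_nonpos.2 hp)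

lemma exists_abs_taylorPoly_rieszKernel_le [FiniteDimensional ℝ E] (p : ℝ) (N : ℕ) :
    ∃ C > 0, ∀ ξ h : E, ξ ≠ 0 → ‖ξ‖ ≤ 2 * ‖h‖ →
      |taylorPoly (rieszKernel p) (N + 1) ξ (ξ + h)| ≤ C * ‖ξ‖ ^ (p - N) * ‖h‖ ^ N := by
  choose C hC hderiv using exists_norm_iteratedFDeriv_rieszKernel_le (E := E) p
  refine ⟨∑ j ∈ Finset.range (N + 1), C j * 2 ^ N,
    Finset.sum_pos (fun j _ => mul_pos (hC j) (by positivity)) ⟨0, by simp⟩, fun ξ h hξ hh => ?_⟩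
  have hpos : 0 < ‖ξ‖ := norm_pos_iff.2 hξ
  rw [taylorPoly, add_sub_cancel_left, mul_assoc, Finset.sum_mul]
  refine (Finset.abs_sum_le_sum_abs _ _).trans (Finset.sum_le_sum fun j hj => ?_)
  have hjN : j ≤ N := Finset.mem_range_succ_iff.1 hj
  have hfact : (j ! : ℝ)⁻¹ ≤ 1 := inv_le_one_of_one_le₀ (by exact_mod_cast j.factorial_pos)
  have hpow : ‖ξ‖ ^ (N - j) ≤ 2 ^ N * ‖h‖ ^ (N - j) :=
    calc ‖ξ‖ ^ (N - j) ≤ (2 * ‖h‖) ^ (N - j) := by gcongr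
      _ ≤ 2 ^ N * ‖h‖ ^ (N - j) := by
        rw [mul_pow]
        gcongr
        · norm_num
        · omega
  calc |(j ! : ℝ)⁻¹ • iteratedFDeriv ℝ j (rieszKernel p) ξ fun _ => h|
      ≤ 1 * (C j * ‖ξ‖ ^ (p - j) * ‖h‖ ^ j) := by
        rw [smul_eq_mul, abs_mul, abs_of_nonneg (by positivity)]
        have happly := (iteratedFDeriv ℝ j (rieszKernel p) ξ).le_opNorm fun _ => h
        rw [Fin.prod_const] at happly
        gcongr
        exact happly.trans (by gcongr; exact hderiv j ξ hξ)
    _ = C j * (‖ξ‖ ^ (p - N) * ‖ξ‖ ^ (N - j) * ‖h‖ ^ j) := by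
        rw [← Real.rpow_natCast ‖ξ‖ (N - j), ← Real.rpow_add hpos, Nat.cast_sub hjN,
          sub_add_sub_cancel]
        ring
    _ ≤ C j * (‖ξ‖ ^ (p - N) * (2 ^ N * ‖h‖ ^ (N - j)) * ‖h‖ ^ j) := by
        have := hC j
        gcongr
    _ = C j * 2 ^ N * (‖ξ‖ ^ (p - N) * ‖h‖ ^ N) := by
        rw [← Nat.sub_add_cancel hjN, pow_add ‖h‖, Nat.sub_add_cancel hjN]
        ring

end RieszKernel

section RieszKernelIntegrals

variable {E : Type*} [NormedAddCommGroup E] [NormedSpace ℝ E] [FiniteDimensional ℝ E]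
  [MeasurableSpace E] [BorelSpace E] {μ : Measure E} [μ.IsAddHaarMeasure] {p r : ℝ}

open Module Pointwise

lemma measurable_rieszKernel {E : Type*} [NormedAddCommGroup E] [MeasurableSpace E]
    [OpensMeasurableSpace E] (p : ℝ) : Measurable (rieszKernel p : E → ℝ) :=
  measurable_norm.pow_const p

lemma integrableOn_ball_rieszKernel [Nontrivial E] (hp : 0 < p + finrank ℝ E) (r : ℝ) :
    IntegrableOn (rieszKernel p) (ball (0 : E) r) μ :=
  integrableOn_ball_of_norm_le_rpow (C := 1) (α := -p) finrank_pos (by linarith)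
    (Eventually.of_forall fun x => by
      rw [neg_neg, one_mul, Real.norm_of_nonneg (rieszKernel_nonneg p x), rieszKernel])
    (measurable_rieszKernel p).aestronglyMeasurable

lemma integrableOn_compl_ball_rieszKernel (hp : p + finrank ℝ E < 0) (hr : 0 < r) :
    IntegrableOn (rieszKernel p) (ball (0 : E) r)ᶜ μ := by
  have hp' : p ≤ 0 := by linarith [(finrank ℝ E).cast_nonneg (α := ℝ)]
  have hjapanese := (integrable_one_add_norm (μ := μ) (E := E) (r := -p) (by linarith)).const_mul
    ((1 + r⁻¹) ^ (-p))
  refine hjapanese.integrableOn.mono' (measurable_rieszKernel p).aestronglyMeasurable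
    (ae_restrict_of_forall_mem measurableSet_ball.compl fun x hx => ?_)
  have hrx : r ≤ ‖x‖ := by simpa using hx
  have hx0 : 0 < ‖x‖ := hr.trans_le hrx
  have hle : 1 + ‖x‖ ≤ (1 + r⁻¹) * ‖x‖ := by
    rw [one_add_mul, add_comm, add_le_add_iff_left, ← div_eq_inv_mul]
    exact (one_le_div hr).2 hrx
  calc ‖rieszKernel p x‖ = (1 + r⁻¹) ^ (-p) * ((1 + r⁻¹) * ‖x‖) ^ p := by
        rw [Real.norm_of_nonneg (rieszKernel_nonneg p x), Real.mul_rpow (by positivity) hx0.le,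
          ← mul_assoc, ← Real.rpow_add (by positivity), neg_add_cancel, Real.rpow_zero, one_mul,
          rieszKernel]
    _ ≤ (1 + r⁻¹) ^ (-p) * (1 + ‖x‖) ^ (- -p) := by
        rw [neg_neg]
        gcongr ?_ * ?_
        exact Real.rpow_le_rpow_of_nonpos (by positivity) hle hp'

lemma setIntegral_smul_rieszKernel (hr : 0 < r) (s : Set E) :
    ∫ x in r • s, rieszKernel p x ∂μ = r ^ (p + finrank ℝ E) * ∫ x in s, rieszKernel p x ∂μ := by
  have h := Measure.setIntegral_comp_smul_of_pos μ (rieszKernel p) s hr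
  simp_rw [rieszKernel, norm_smul, Real.norm_of_nonneg hr.le,
    Real.mul_rpow hr.le (norm_nonneg _), integral_const_mul, smul_eq_mul] at h
  simp_rw [rieszKernel]
  rw [Real.rpow_add hr, Real.rpow_natCast, mul_right_comm, h,
    inv_mul_eq_div, div_mul_cancel₀ _ (by positivity)]

lemma setIntegral_ball_rieszKernel (hr : 0 < r) :
    ∫ x in ball (0 : E) r, rieszKernel p x ∂μ =
      r ^ (p + finrank ℝ E) * ∫ x in ball (0 : E) 1, rieszKernel p x ∂μ := by
  rw [← smul_unitBall_of_pos hr, setIntegral_smul_rieszKernel hr]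

lemma setIntegral_compl_ball_rieszKernel (hr : 0 < r) :
    ∫ x in (ball (0 : E) r)ᶜ, rieszKernel p x ∂μ =
      r ^ (p + finrank ℝ E) * ∫ x in (ball (0 : E) 1)ᶜ, rieszKernel p x ∂μ := by
  have hcompl : r • (ball (0 : E) 1)ᶜ = (ball 0 r)ᶜ := by
    rw [← preimage_smul_inv₀ hr.ne', preimage_compl, preimage_smul_inv₀ hr.ne',
      smul_unitBall_of_pos hr]
  rw [← hcompl, setIntegral_smul_rieszKernel hr]

lemma integrableOn_ball_rieszKernel_add [Nontrivial E] (hp : 0 < p + finrank ℝ E) (r : ℝ) (h : E) :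
    IntegrableOn (fun ξ => rieszKernel p (ξ + h)) (ball (0 : E) r) μ := by
  have hball : (· + h) ⁻¹' ball h r = ball 0 r := by simp
  rw [← hball]
  exact ((measurePreserving_add_right μ h).integrableOn_comp_preimage
    (measurableEmbedding_addRight h)).2 ((integrableOn_ball_rieszKernel hp (r + ‖h‖)).mono_set
      (ball_subset_ball' (by rw [dist_zero_right])))

lemma setIntegral_ball_rieszKernel_add_le [Nontrivial E] (hp : 0 < p + finrank ℝ E) (r : ℝ)
    (h : E) :
    ∫ ξ in ball (0 : E) r, rieszKernel p (ξ + h) ∂μ ≤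
      ∫ ξ in ball (0 : E) (r + ‖h‖), rieszKernel p ξ ∂μ := by
  have hball : (· + h) ⁻¹' ball h r = ball 0 r := by simp
  rw [← hball, (measurePreserving_add_right μ h).setIntegral_preimage_emb
    (measurableEmbedding_addRight h) (rieszKernel p)]
  exact setIntegral_mono_set (integrableOn_ball_rieszKernel hp _)
    (Eventually.of_forall (rieszKernel_nonneg p))
    (ball_subset_ball' (by rw [dist_zero_right])).eventuallyLE

end RieszKernelIntegrals

section TaylorIntegral

variable {E : Type*} [NormedAddCommGroup E] [NormedSpace ℝ E]

lemma mul_taylorPoly_add (f g : E → ℝ) (N : ℕ) (ξ h : E) :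
    g ξ * taylorPoly f N ξ (ξ + h) =
      ∑ j ∈ Finset.range N, (j ! : ℝ)⁻¹ * (g ξ • iteratedFDeriv ℝ j f ξ) fun _ => h := by
  simp only [taylorPoly, add_sub_cancel_left, Finset.mul_sum, smul_apply, smul_eq_mul,
    mul_left_comm]

variable [MeasurableSpace E] {μ : Measure E} {f g : E → ℝ} {N : ℕ}

lemma integrable_multilinear_apply {j : ℕ} {Φ : E → E [×j]→L[ℝ] ℝ} (hΦ : Integrable Φ μ)
    (v : Fin j → E) : Integrable (fun ξ => Φ ξ v) μ :=
  (ContinuousMultilinearMap.apply ℝ (fun _ => E) ℝ v).integrable_comp hΦ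

lemma integrable_mul_taylorPoly
    (hint : ∀ j < N, Integrable (fun ξ => g ξ • iteratedFDeriv ℝ j f ξ) μ) (h : E) :
    Integrable (fun ξ => g ξ * taylorPoly f N ξ (ξ + h)) μ := by
  simp only [mul_taylorPoly_add]
  exact integrable_finsetSum _ fun j hj =>
    (integrable_multilinear_apply (hint j (Finset.mem_range.1 hj)) _).const_mul _

lemma integral_mul_taylorPoly
    (hint : ∀ j < N, Integrable (fun ξ => g ξ • iteratedFDeriv ℝ j f ξ) μ) (h : E) :
    ∫ ξ, g ξ * taylorPoly f N ξ (ξ + h) ∂μ = ∑ j ∈ Finset.range N,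
      (j ! : ℝ)⁻¹ * (∫ ξ, g ξ • iteratedFDeriv ℝ j f ξ ∂μ) fun _ => h := by
  simp only [mul_taylorPoly_add]
  rw [integral_finsetSum _ fun j hj =>
    (integrable_multilinear_apply (hint j (Finset.mem_range.1 hj)) _).const_mul _]
  refine Finset.sum_congr rfl fun j hj => ?_
  rw [integral_const_mul, ContinuousMultilinearMap.integral_apply (hint j (Finset.mem_range.1 hj))]

lemma isPolyMap_integral_mul_taylorPoly
    (hint : ∀ j < N + 1, Integrable (fun ξ => g ξ • iteratedFDeriv ℝ j f ξ) μ) :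
    IsPolyMap N (fun h => ∫ ξ, g ξ * taylorPoly f (N + 1) ξ (ξ + h) ∂μ) := by
  simp only [integral_mul_taylorPoly hint]
  exact IsPolyMap.sum fun j hj => ((IsPolyMap.multilinear_diag _).const_smul _).mono
    (Finset.mem_range_succ_iff.1 hj)

end TaylorIntegral

section RieszPotentialExpansion

open Module

variable {E : Type*} [NormedAddCommGroup E] [InnerProductSpace ℝ E] [FiniteDimensional ℝ E]
  [Nontrivial E] [MeasurableSpace E] [BorelSpace E] {μ : Measure E} [μ.IsAddHaarMeasure]
  {p β M ρ : ℝ} {g : E → ℝ} {N : ℕ}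

lemma aestronglyMeasurable_iteratedFDeriv_rieszKernel (p : ℝ) (j : ℕ) :
    AEStronglyMeasurable (iteratedFDeriv ℝ j (rieszKernel p : E → ℝ)) μ := by
  rw [← restrict_compl_singleton (μ := μ) (0 : E)]
  exact (continuousOn_iteratedFDeriv_rieszKernel p j).aestronglyMeasurable
    (measurableSet_singleton _).compl

lemma integrable_smul_iteratedFDeriv_rieszKernel {j : ℕ} (hj : 0 < p + β - j + finrank ℝ E)
    (hg : AEStronglyMeasurable g μ) (hgM : ∀ ξ, |g ξ| ≤ M * ‖ξ‖ ^ β)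
    (hgρ : ∀ ξ ∉ ball 0 ρ, g ξ = 0) :
    Integrable (fun ξ => g ξ • iteratedFDeriv ℝ j (rieszKernel p) ξ) μ := by
  obtain ⟨C, -, hC⟩ := exists_norm_iteratedFDeriv_rieszKernel_le (E := E) p j
  refine (integrableOn_iff_integrable_of_support_subset (s := ball 0 ρ) fun ξ hξ => ?_).1
    (integrableOn_ball_of_norm_le_rpow (C := M * C) (α := -(p + β - j)) finrank_pos
      (by linarith) ?_ (hg.smul (aestronglyMeasurable_iteratedFDeriv_rieszKernel p j)))
  · by_contra hout
    exact hξ (show g ξ • iteratedFDeriv ℝ j _ ξ = 0 by rw [hgρ ξ hout, zero_smul])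
  · have h0 : ∀ᵐ ξ ∂μ.restrict (ball 0 ρ), ξ ≠ 0 := ae_restrict_of_ae (Measure.ae_ne μ 0)
    filter_upwards [h0] with ξ hξ
    calc ‖g ξ • iteratedFDeriv ℝ j (rieszKernel p) ξ‖
        ≤ M * ‖ξ‖ ^ β * (C * ‖ξ‖ ^ (p - j)) := by
          rw [norm_smul]
          exact mul_le_mul (hgM ξ) (hC ξ hξ) (norm_nonneg _) ((abs_nonneg _).trans (hgM ξ))
      _ = M * C * ‖ξ‖ ^ (- -(p + β - j)) := by
          rw [mul_mul_mul_comm, ← Real.rpow_add (norm_pos_iff.2 hξ), neg_neg]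
          ring_nf

lemma integrable_rieszKernel_add_mul {B : ℝ} (hp : 0 < p + finrank ℝ E)
    (hg : AEStronglyMeasurable g μ) (hgB : ∀ ξ, |g ξ| ≤ B) (hgρ : ∀ ξ ∉ ball 0 ρ, g ξ = 0) (h : E) :
    Integrable (fun ξ => rieszKernel p (ξ + h) * g ξ) μ := by
  refine (integrableOn_iff_integrable_of_support_subset (s := ball 0 ρ) fun ξ hξ => ?_).1
    ((integrableOn_ball_rieszKernel_add hp ρ h).mul_bdd hg.restrict
      (Eventually.of_forall hgB))
  by_contra hout
  exact hξ (show _ * g ξ = 0 by rw [hgρ ξ hout, mul_zero])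

lemma abs_mul_le_mul_rieszKernel {E : Type*} [NormedAddCommGroup E] {p β M A a b : ℝ} {ξ : E}
    (hξ : ξ ≠ 0) (hM : 0 ≤ M) (ha : |a| ≤ M * ‖ξ‖ ^ β) (hb : |b| ≤ A * ‖ξ‖ ^ p) :
    |a * b| ≤ M * A * rieszKernel (β + p) ξ := by
  rw [abs_mul, rieszKernel, Real.rpow_add (norm_pos_iff.2 hξ), ← mul_mul_mul_comm]
  exact mul_le_mul ha hb (abs_nonneg _) (by positivity)

lemma abs_mul_rieszKernel_sub_le {E : Type*} [NormedAddCommGroup E] {p q β M A r a b : ℝ}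
    {ξ y : E} (hξ : ξ ≠ 0) (hM : 0 ≤ M) (hβ : 0 ≤ β) (ha : |a| ≤ M * ‖ξ‖ ^ β) (hr : ‖ξ‖ ≤ r)
    (hb : |b| ≤ A * ‖ξ‖ ^ q) :
    |a * (rieszKernel p y - b)| ≤
      M * r ^ β * rieszKernel p y + M * A * rieszKernel (β + q) ξ := by
  rw [mul_sub]
  refine (abs_sub _ _).trans (add_le_add ?_ (abs_mul_le_mul_rieszKernel hξ hM ha hb))
  rw [abs_mul, abs_of_nonneg (rieszKernel_nonneg p _)]
  gcongr
  · exact rieszKernel_nonneg p _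
  · exact ha.trans (by gcongr)

lemma exists_setIntegral_ball_abs_mul_sub_taylorPoly_rieszKernel_le (μ : Measure E)
    [μ.IsAddHaarMeasure] (hp : 0 < p + finrank ℝ E) (hβ : 0 ≤ β)
    (hN : N < p + finrank ℝ E + β) :
    ∃ C ≥ 0, ∀ {M : ℝ} {g : E → ℝ}, 0 ≤ M → (∀ ξ, |g ξ| ≤ M * ‖ξ‖ ^ β) → ∀ h ≠ 0,
      ∫ ξ in ball 0 (2 * ‖h‖), |g ξ * (rieszKernel p (ξ + h) -
        taylorPoly (rieszKernel p) (N + 1) ξ (ξ + h))| ∂μ ≤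
          C * M * ‖h‖ ^ (p + finrank ℝ E + β) := by
  obtain ⟨C, hC0, hC⟩ := exists_abs_taylorPoly_rieszKernel_le (E := E) p N
  set q : ℝ := β + (p - N) with hq
  have hqd : 0 < q + finrank ℝ E := by linarith
  set J := ∫ ξ in ball (0 : E) 1, rieszKernel p ξ ∂μ
  set J' := ∫ ξ in ball (0 : E) 1, rieszKernel q ξ ∂μ
  have hJ0 : 0 ≤ J := integral_nonneg (rieszKernel_nonneg p)
  have hJ0' : 0 ≤ J' := integral_nonneg (rieszKernel_nonneg q)
  refine ⟨2 ^ β * (3 ^ (p + finrank ℝ E) * J) + C * (2 ^ (q + finrank ℝ E) * J'), by positivity,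
    fun {M g} hM hgM h hh => ?_⟩
  have hr : 0 < ‖h‖ := norm_pos_iff.2 hh
  have hpoint : ∀ᵐ ξ ∂μ.restrict (ball (0 : E) (2 * ‖h‖)), |g ξ * (rieszKernel p (ξ + h) -
      taylorPoly (rieszKernel p) (N + 1) ξ (ξ + h))| ≤
        M * (2 * ‖h‖) ^ β * rieszKernel p (ξ + h) + M * (C * ‖h‖ ^ N) * rieszKernel q ξ := by
    filter_upwards [ae_restrict_mem measurableSet_ball, ae_restrict_of_ae (Measure.ae_ne μ 0)]
      with ξ hξ hξ0
    have hξh : ‖ξ‖ ≤ 2 * ‖h‖ := (mem_ball_zero_iff.1 hξ).le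
    exact abs_mul_rieszKernel_sub_le hξ0 hM hβ (hgM ξ) hξh
      ((hC ξ h hξ0 hξh).trans_eq (mul_right_comm _ _ _))
  have hint := (integrableOn_ball_rieszKernel_add (μ := μ) hp (2 * ‖h‖) h).const_mul
    (M * (2 * ‖h‖) ^ β)
  have hint' := (integrableOn_ball_rieszKernel (μ := μ) hqd (2 * ‖h‖)).const_mul
    (M * (C * ‖h‖ ^ N))
  calc _ ≤ M * (2 * ‖h‖) ^ β * ∫ ξ in ball 0 (2 * ‖h‖), rieszKernel p (ξ + h) ∂μ +
          M * (C * ‖h‖ ^ N) * ∫ ξ in ball 0 (2 * ‖h‖), rieszKernel q ξ ∂μ := by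
        rw [← integral_const_mul, ← integral_const_mul, ← integral_add hint hint']
        exact integral_mono_of_nonneg (Eventually.of_forall fun _ => abs_nonneg _)
          (hint.add hint') hpoint
    _ ≤ M * (2 * ‖h‖) ^ β * ((3 * ‖h‖) ^ (p + finrank ℝ E) * J) +
          M * (C * ‖h‖ ^ N) * ((2 * ‖h‖) ^ (q + finrank ℝ E) * J') := by
        rw [← setIntegral_ball_rieszKernel (by positivity),
          ← setIntegral_ball_rieszKernel (by positivity), show 3 * ‖h‖ = 2 * ‖h‖ + ‖h‖ by ring]
        gcongr
        exact setIntegral_ball_rieszKernel_add_le hp _ h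
    _ = 2 ^ β * (3 ^ (p + finrank ℝ E) * J) * M * ‖h‖ ^ (p + finrank ℝ E + β) +
          C * (2 ^ (q + finrank ℝ E) * J') * M * ‖h‖ ^ (N + (q + finrank ℝ E)) := by
        simp only [Real.mul_rpow two_pos.le hr.le, Real.mul_rpow three_pos.le hr.le,
          Real.rpow_add hr, Real.rpow_natCast]
        ring
    _ = _ := by rw [hq]; ring_nf

lemma exists_setIntegral_compl_ball_abs_mul_sub_taylorPoly_rieszKernel_le {E : Type*}
    [NormedAddCommGroup E] [InnerProductSpace ℝ E] [FiniteDimensional ℝ E] [MeasurableSpace E]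
    [BorelSpace E] (μ : Measure E) [μ.IsAddHaarMeasure] (hp : p ≤ N + 1)
    (hN : p + finrank ℝ E + β < N + 1) :
    ∃ C ≥ 0, ∀ {M : ℝ} {g : E → ℝ}, 0 ≤ M → (∀ ξ, |g ξ| ≤ M * ‖ξ‖ ^ β) → ∀ h ≠ 0,
      ∫ ξ in (ball 0 (2 * ‖h‖))ᶜ, |g ξ * (rieszKernel p (ξ + h) -
        taylorPoly (rieszKernel p) (N + 1) ξ (ξ + h))| ∂μ ≤
          C * M * ‖h‖ ^ (p + finrank ℝ E + β) := by
  obtain ⟨C, hC0, hC⟩ := exists_abs_rieszKernel_sub_taylorPoly_le (E := E) (p := p) (N := N + 1)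
    (by exact_mod_cast hp)
  set q : ℝ := β + (p - (N + 1 : ℕ)) with hq
  set J := ∫ ξ in (ball (0 : E) 1)ᶜ, rieszKernel q ξ ∂μ
  have hJ0 : 0 ≤ J := integral_nonneg (rieszKernel_nonneg q)
  have hqd : q + finrank ℝ E < 0 := by push_cast [hq]; linarith
  refine ⟨C * (2 ^ (q + finrank ℝ E) * J), by positivity, fun {M g} hM hgM h hh => ?_⟩
  have hr : 0 < ‖h‖ := norm_pos_iff.2 hh
  have hpoint : ∀ ξ ∈ (ball (0 : E) (2 * ‖h‖))ᶜ, |g ξ * (rieszKernel p (ξ + h) -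
      taylorPoly (rieszKernel p) (N + 1) ξ (ξ + h))| ≤
        M * (C * ‖h‖ ^ (N + 1)) * rieszKernel q ξ := fun ξ hξ => by
    have hle : 2 * ‖h‖ ≤ ‖ξ‖ := by simpa using hξ
    have hξ0 : ξ ≠ 0 := norm_pos_iff.1 (by linarith)
    exact abs_mul_le_mul_rieszKernel hξ0 hM (hgM ξ)
      ((hC ξ h hξ0 hle).trans_eq (mul_right_comm _ _ _))
  calc _ ≤ ∫ ξ in (ball 0 (2 * ‖h‖))ᶜ, M * (C * ‖h‖ ^ (N + 1)) * rieszKernel q ξ ∂μ :=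
        integral_mono_of_nonneg (Eventually.of_forall fun _ => abs_nonneg _)
          ((integrableOn_compl_ball_rieszKernel hqd (by positivity)).const_mul _)
          (ae_restrict_of_forall_mem measurableSet_ball.compl hpoint)
    _ = C * (2 ^ (q + finrank ℝ E) * J) * M * ‖h‖ ^ ((N + 1 : ℕ) + (q + finrank ℝ E)) := by
        rw [integral_const_mul, setIntegral_compl_ball_rieszKernel (by positivity),
          Real.mul_rpow two_pos.le hr.le, Real.rpow_add hr (N + 1 : ℕ), Real.rpow_natCast]
        ring
    _ = _ := by rw [hq]; ring_nf

theorem exists_isPolyMap_abs_integral_rieszKernel_add_sub_le (μ : Measure E)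
    [μ.IsAddHaarMeasure] (hp : 0 < p + finrank ℝ E) (hβ : 0 ≤ β)
    (hN : N < p + finrank ℝ E + β) (hN' : p + finrank ℝ E + β < N + 1) :
    ∃ C ≥ 0, ∀ {M ρ : ℝ} {g : E → ℝ}, 0 ≤ M → AEStronglyMeasurable g μ →
      (∀ ξ, |g ξ| ≤ M * ‖ξ‖ ^ β) → (∀ ξ ∉ ball 0 ρ, g ξ = 0) →
      ∃ P : E → ℝ, IsPolyMap N P ∧ ∀ h,
        |∫ ξ, rieszKernel p (ξ + h) * g ξ ∂μ - P h| ≤ C * M * ‖h‖ ^ (p + finrank ℝ E + β) := by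
  obtain ⟨C₁, hC₁, hnear⟩ :=
    exists_setIntegral_ball_abs_mul_sub_taylorPoly_rieszKernel_le μ hp hβ hN
  obtain ⟨C₂, hC₂, hfar⟩ :=
    exists_setIntegral_compl_ball_abs_mul_sub_taylorPoly_rieszKernel_le (p := p) (β := β) μ
      (by linarith [(finrank ℝ E).cast_nonneg (α := ℝ)]) hN'
  refine ⟨C₁ + C₂, by positivity, fun {M ρ g} hM hg hgM hgρ => ?_⟩
  have hcoeff (j : ℕ) (hj : j < N + 1) :
      Integrable (fun ξ => g ξ • iteratedFDeriv ℝ j (rieszKernel p) ξ) μ := by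
    have hjN : (j : ℝ) ≤ N := by exact_mod_cast Nat.lt_succ_iff.1 hj
    exact integrable_smul_iteratedFDeriv_rieszKernel (by linarith) hg hgM hgρ
  have hgB (ξ) : |g ξ| ≤ M * |ρ| ^ β := by
    by_cases hξ : ξ ∈ ball 0 ρ
    · exact (hgM ξ).trans (by gcongr; exact (mem_ball_zero_iff.1 hξ).le.trans (le_abs_self ρ))
    · rw [hgρ ξ hξ, abs_zero]
      positivity
  refine ⟨_, isPolyMap_integral_mul_taylorPoly hcoeff, fun h => ?_⟩
  rcases eq_or_ne h 0 with rfl | hh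
  · simp_rw [add_zero, taylorPoly_self, mul_comm (g _), sub_self, abs_zero]
    positivity
  have hK := integrable_rieszKernel_add_mul hp hg hgB hgρ h
  have hT := integrable_mul_taylorPoly hcoeff h
  have hrem := (hK.sub hT).congr (Eventually.of_forall fun ξ =>
    show _ = g ξ * (rieszKernel p (ξ + h) - taylorPoly (rieszKernel p) (N + 1) ξ (ξ + h)) by
      rw [Pi.sub_apply]; ring)
  rw [← integral_sub hK hT]
  simp_rw [mul_comm (rieszKernel p _), ← mul_sub]
  calc _ ≤ ∫ ξ, |g ξ * (rieszKernel p (ξ + h) -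
        taylorPoly (rieszKernel p) (N + 1) ξ (ξ + h))| ∂μ := abs_integral_le_integral_abs
    _ ≤ C₁ * M * ‖h‖ ^ (p + finrank ℝ E + β) + C₂ * M * ‖h‖ ^ (p + finrank ℝ E + β) := by
        rw [← integral_add_compl measurableSet_ball hrem.abs]
        exact add_le_add (hnear hM hgM h hh) (hfar hM hgM h hh)
    _ = _ := by ring

theorem exists_isPolyMap_abs_integral_rieszKernel_sub_le {E : Type*} [NormedAddCommGroup E]
    [InnerProductSpace ℝ E] [FiniteDimensional ℝ E] [Nontrivial E] [MeasurableSpace E]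
    [BorelSpace E] (μ : Measure E) [μ.IsAddHaarMeasure] {p β : ℝ} {N : ℕ}
    (hp : 0 < p + finrank ℝ E) (hβ : 0 ≤ β) (hN : N < p + finrank ℝ E + β)
    (hN' : p + finrank ℝ E + β < N + 1) :
    ∃ C ≥ 0, ∀ {M ρ : ℝ} {a x : E} {w : E → ℝ}, 0 ≤ M → AEStronglyMeasurable w μ →
      (∀ y, |w y| ≤ M * ‖y - x‖ ^ β) → (∀ y ∉ ball a ρ, w y = 0) →
      ∃ P : E → ℝ, IsPolyMap N P ∧ ∀ z,
        |∫ y, rieszKernel p (z - y) * w y ∂μ - P z| ≤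
          C * M * ‖z - x‖ ^ (p + finrank ℝ E + β) := by
  obtain ⟨C, hC0, hC⟩ := exists_isPolyMap_abs_integral_rieszKernel_add_sub_le μ hp hβ hN hN'
  refine ⟨C, hC0, fun {M ρ a x w} hM hw hwM hwρ => ?_⟩
  obtain ⟨P, hP, hPC⟩ := hC (g := fun ξ => w (x - ξ)) (ρ := ρ + dist x a) hM
    (hw.comp_quasiMeasurePreserving (quasiMeasurePreserving_sub_left μ x))
    (fun ξ => by simpa using hwM (x - ξ))
    (fun ξ hξ => hwρ _ fun hmem => hξ <| by
      rw [mem_ball_zero_iff, ← dist_self_sub_right x ξ]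
      linarith [dist_triangle_right x (x - ξ) a, mem_ball.1 hmem])
  refine ⟨fun z => P (z - x), hP.comp_sub_const x, fun z => ?_⟩
  rw [← integral_sub_left_eq_self (fun y => rieszKernel p (z - y) * w y) μ x]
  simpa only [sub_sub_eq_add_sub, add_sub_assoc, add_comm _ (z - x), sub_add_eq_add_sub]
    using hPC (z - x)

end RieszPotentialExpansion

section SphereCoefficients

open Polynomial

lemma eval_dickson_one_mul {A : Type*} [CommRing A] (a b : A) (i : ℕ) :
    (dickson 1 (a * b) i).eval (a + b) = a ^ i + b ^ i := by
  induction i using Nat.twoStepInduction with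
  | zero => norm_num [dickson_zero]
  | one => simp [dickson_one]
  | more i h₀ h₁ =>
    simp only [dickson_add_two, eval_sub, eval_mul, eval_X, eval_C, h₀, h₁]
    ring

lemma map_eval_dickson {A B : Type*} [CommRing A] [CommRing B] (f : A →+* B) (d t : A) (i : ℕ) :
    f ((dickson 1 d i).eval t) = (dickson 1 (f d) i).eval (f t) := by
  rw [← map_dickson f, eval_map, eval₂_at_apply]

lemma IsPolyMap.eval_dickson {E A : Type*} [NormedAddCommGroup E] [NormedSpace ℝ E]
    [NormedCommRing A] [NormedAlgebra ℝ A] {r : ℕ} {t d : E → A} (ht : IsPolyMap r t)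
    (hd : IsPolyMap (2 * r) d) (i : ℕ) :
    IsPolyMap (i * r) (fun x => (dickson 1 (d x) i).eval (t x)) := by
  induction i using Nat.twoStepInduction with
  | zero => simpa [dickson_zero] using IsPolyMap.const _ _
  | one => simpa [dickson_one] using ht
  | more i h₀ h₁ =>
    simp only [dickson_add_two, eval_sub, eval_mul, eval_X, eval_C]
    exact ((ht.mul h₁).mono (by lia)).sub ((hd.mul h₀).mono (by lia))

variable {E : Type*} [NormedAddCommGroup E]

lemma IsPolyMap.integral_continuousMap [NormedSpace ℝ E] {X : Type*} [TopologicalSpace X]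
    [CompactSpace X] [MeasurableSpace X] [BorelSpace X] (ν : Measure X) [IsFiniteMeasure ν]
    {m : ℕ} {V : E → C(X, ℝ)} (hV : IsPolyMap m V) :
    IsPolyMap m (fun x => ∫ θ, V x θ ∂ν) := by
  have heq : (fun x => ∫ θ, V x θ ∂ν) = fun x =>
      (L1.integralCLM ∘L ContinuousMap.toLp 1 ν ℝ : C(X, ℝ) →L[ℝ] ℝ) (V x) := by
    ext x
    rw [← integral_congr_ae (ContinuousMap.coeFn_toLp (p := 1) (𝕜 := ℝ) ν (V x)),
      ← L1.integral_eq_integral, L1.integral_eq]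
    rfl
  rw [heq]
  exact hV.clm_comp _

variable [InnerProductSpace ℝ E]

/-- Restriction to the unit sphere of the homogeneous polynomial given by a multilinear map. -/
def sphereRestrict (E : Type*) [NormedAddCommGroup E] [InnerProductSpace ℝ E]
    [FiniteDimensional ℝ E] (j : ℕ) : (E [×j]→L[ℝ] ℝ) →L[ℝ] C(sphere (0 : E) 1, ℝ) :=
  LinearMap.mkContinuous
    { toFun := fun Φ => (⟨fun θ => Φ fun _ => θ, by fun_prop⟩ : C(sphere (0 : E) 1, ℝ))
      map_add' := fun _ _ => rfl
      map_smul' := fun _ _ => rfl } 1 fun Φ => by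
    rw [one_mul]
    exact (ContinuousMap.norm_le _ (norm_nonneg Φ)).2 fun θ =>
      (Φ.le_opNorm _).trans_eq (by simp)

/-- The restriction to the unit sphere of the linear form `⟪x, ·⟫`. -/
def sphereInner (E : Type*) [NormedAddCommGroup E] [InnerProductSpace ℝ E]
    [FiniteDimensional ℝ E] : E →L[ℝ] C(sphere (0 : E) 1, ℝ) :=
  LinearMap.toContinuousLinearMap
    { toFun := fun x => ⟨fun θ => inner ℝ x θ, by fun_prop⟩
      map_add' := fun _ _ => by ext; exact inner_add_left _ _ _
      map_smul' := fun _ _ => by ext; exact real_inner_smul_left _ _ _ }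

lemma isPolyMap_norm_sq : IsPolyMap 2 (fun x : E => ‖x‖ ^ 2) := by
  simp only [← real_inner_self_eq_norm_sq]
  exact (IsPolyMap.continuousLinearMap (.id ℝ E)).bilinear
    (IsPolyMap.continuousLinearMap (.id ℝ E)) (innerSL ℝ)

end SphereCoefficients

section PolarCoordinates

open Module

lemma integral_eq_integral_toSphere {E F : Type*} [NormedAddCommGroup E] [NormedSpace ℝ E]
    [FiniteDimensional ℝ E] [Nontrivial E] [MeasurableSpace E] [BorelSpace E]
    [NormedAddCommGroup F] [NormedSpace ℝ F] {μ : Measure E} [μ.IsAddHaarMeasure] {G : E → F}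
    (hG : Integrable G μ) :
    ∫ z, G z ∂μ = ∫ θ : sphere (0 : E) 1,
      (∫ s in Ioi (0 : ℝ), s ^ (finrank ℝ E - 1) • G (s • (θ : E))) ∂μ.toSphere := by
  have hmp := μ.measurePreserving_homeomorphUnitSphereProd
  have hme := (homeomorphUnitSphereProd E).measurableEmbedding
  set g : sphere (0 : E) 1 × Ioi (0 : ℝ) → F := fun q => G (q.2.1 • q.1.1)
  have hg : g ∘ homeomorphUnitSphereProd E = G ∘ Subtype.val := by
    ext x
    simp [g, smul_smul, mul_inv_cancel₀ (norm_ne_zero_iff.2 x.2)]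
  have hgi : Integrable g (μ.toSphere.prod (.volumeIoiPow (finrank ℝ E - 1))) := by
    rw [← hmp.integrable_comp_emb hme, hg,
      ← integrableOn_iff_comap_subtypeVal (measurableSet_singleton _).compl]
    exact hG.integrableOn
  calc ∫ z, G z ∂μ = ∫ x : ({0}ᶜ : Set E), G x ∂μ.comap Subtype.val := by
        rw [integral_subtype_comap (measurableSet_singleton _).compl G, restrict_compl_singleton]
    _ = ∫ q, g q ∂μ.toSphere.prod (.volumeIoiPow (finrank ℝ E - 1)) := by
        rw [← hmp.integral_comp hme g]
        exact integral_congr_ae (Eventually.of_forall fun x => (congrFun hg x).symm)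
    _ = ∫ θ, (∫ s, g (θ, s) ∂.volumeIoiPow (finrank ℝ E - 1)) ∂μ.toSphere := integral_prod g hgi
    _ = _ := by
        refine integral_congr_ae (Eventually.of_forall fun θ => ?_)
        simp only [g, Measure.volumeIoiPow, ENNReal.ofReal]
        rw [integral_withDensity_eq_integral_smul
          (measurable_subtype_coe.pow_const _).real_toNNReal,
          integral_subtype_comap measurableSet_Ioi
            fun s => Real.toNNReal (s ^ (finrank ℝ E - 1)) • G (s • (θ : E))]
        exact setIntegral_congr_fun measurableSet_Ioi fun s hs => by
          simp only [NNReal.smul_def, Real.coe_toNNReal _ (pow_nonneg hs.out.le _)]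

lemma integral_eq_integral_toSphere_symm {E : Type*} [NormedAddCommGroup E] [NormedSpace ℝ E]
    [FiniteDimensional ℝ E] [Nontrivial E] [MeasurableSpace E] [BorelSpace E]
    {μ : Measure E} [μ.IsAddHaarMeasure] {G : E → ℝ} (hG : Integrable G μ) (x : E) :
    ∫ z, G z ∂μ = ∫ θ : sphere (0 : E) 1, (∫ s in Ioi (0 : ℝ),
      (s ^ (finrank ℝ E - 1) * G (x + s • (θ : E)) +
        s ^ (finrank ℝ E - 1) * G (x + s • -(θ : E))) / 2) ∂μ.toSphere := by
  have hGx : Integrable (fun z => G (x + z)) μ := hG.comp_add_left x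
  have hGx' : Integrable (fun z => G (x + -z)) μ := hGx.comp_neg
  have hmean : ∫ z, G z ∂μ = ∫ z, (G (x + z) + G (x + -z)) / 2 ∂μ := by
    rw [integral_div, integral_add hGx hGx', integral_neg_eq_self (fun z => G (x + z)),
      integral_add_left_eq_self, add_self_div_two]
  have hmeanInt : Integrable (fun z => (G (x + z) + G (x + -z)) / 2) μ :=
    (hGx.add hGx').div_const 2
  rw [hmean, integral_eq_integral_toSphere hmeanInt]
  simp only [smul_eq_mul, mul_div_assoc', mul_add, smul_neg]

end PolarCoordinates

section RieszPotential

open Module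

lemma rieszKernel_sub_comm {E : Type*} [NormedAddCommGroup E] (p : ℝ) (x y : E) :
    rieszKernel p (x - y) = rieszKernel p (y - x) := by
  rw [rieszKernel, norm_sub_rev, rieszKernel]

/-- The Riesz potential `x ↦ ∫ y in s, ‖x - y‖ ^ p * f y` of the density `f` on `s`, up to the
normalizing constant. -/
def rieszPotential {E : Type*} [NormedAddCommGroup E] [MeasurableSpace E] (μ : Measure E) (p : ℝ)
    (s : Set E) (f : E → ℝ) (x : E) : ℝ :=
  ∫ y in s, rieszKernel p (x - y) * f y ∂μ

lemma rieszPotential_eq_integral_indicator {E : Type*} [NormedAddCommGroup E] [MeasurableSpace E]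
    (μ : Measure E) (p : ℝ) {s : Set E} (hs : MeasurableSet s) (f : E → ℝ) (x : E) :
    rieszPotential μ p s f x = ∫ y, rieszKernel p (x - y) * s.indicator f y ∂μ := by
  simp only [rieszPotential, ← integral_indicator hs, indicator_mul_right]

variable {E : Type*} [NormedAddCommGroup E] [NormedSpace ℝ E] [FiniteDimensional ℝ E]
  [Nontrivial E] [MeasurableSpace E] [BorelSpace E] {μ : Measure E} [μ.IsAddHaarMeasure]
  {p R M : ℝ} {f g : E → ℝ}

lemma integrableOn_rieszKernel_sub_mul (hp : 0 < p + finrank ℝ E)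
    (hf : AEStronglyMeasurable f (μ.restrict (ball 0 R))) (hM : ∀ y ∈ ball 0 R, |f y| ≤ M) (x : E) :
    IntegrableOn (fun y => rieszKernel p (x - y) * f y) (ball 0 R) μ := by
  simp only [rieszKernel_sub_comm p x, sub_eq_add_neg _ x]
  exact (integrableOn_ball_rieszKernel_add hp R (-x)).mul_bdd hf
    (ae_restrict_of_forall_mem measurableSet_ball hM)

lemma integrableOn_rieszKernel_sub_mul_of_continuous (hp : 0 < p + finrank ℝ E)
    (hf : Continuous f) (x : E) :
    IntegrableOn (fun y => rieszKernel p (x - y) * f y) (ball 0 R) μ := by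
  obtain ⟨M, hM⟩ := (isCompact_closedBall (0 : E) R).exists_bound_of_continuousOn hf.continuousOn
  exact integrableOn_rieszKernel_sub_mul hp hf.aestronglyMeasurable
    (fun y hy => hM y (ball_subset_closedBall hy)) x

lemma rieszPotential_sub_of_abs_sub_le (hp : 0 < p + finrank ℝ E)
    (hf : AEStronglyMeasurable f (μ.restrict (ball 0 R))) (hg : Continuous g)
    (hM : ∀ y ∈ ball 0 R, |f y - g y| ≤ M) (x : E) :
    rieszPotential μ p (ball 0 R) (fun y => f y - g y) x =
      rieszPotential μ p (ball 0 R) f x - rieszPotential μ p (ball 0 R) g x := by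
  have hgint := integrableOn_rieszKernel_sub_mul_of_continuous (μ := μ) (R := R) hp hg x
  have hsub : IntegrableOn (fun y => rieszKernel p (x - y) * (f y - g y)) (ball 0 R) μ :=
    integrableOn_rieszKernel_sub_mul hp (hf.sub hg.aestronglyMeasurable) hM x
  rw [eq_sub_iff_add_eq, rieszPotential, rieszPotential, ← integral_add hsub hgint]
  simp only [← mul_add, sub_add_cancel, rieszPotential]

lemma exists_abs_rieszPotential_le (μ : Measure E) [μ.IsAddHaarMeasure]
    (hp : 0 < p + finrank ℝ E) :
    ∃ C ≥ 0, ∀ {R M : ℝ} {f : E → ℝ}, (∀ y ∈ ball 0 R, |f y| ≤ M) → ∀ x ∈ ball 0 R,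
      |rieszPotential μ p (ball 0 R) f x| ≤ C * M * R ^ (p + finrank ℝ E) := by
  have hint₀ : 0 ≤ ∫ ξ in ball (0 : E) 1, rieszKernel p ξ ∂μ :=
    integral_nonneg (rieszKernel_nonneg p)
  refine ⟨2 ^ (p + finrank ℝ E) * ∫ ξ in ball (0 : E) 1, rieszKernel p ξ ∂μ, by positivity,
    fun {R M f} hM x hx => ?_⟩
  have hR : 0 < R := dist_nonneg.trans_lt (mem_ball.1 hx)
  have hM₀ : 0 ≤ M := (abs_nonneg _).trans (hM x hx)
  have hkernel : ∫ y in ball 0 R, rieszKernel p (x - y) ∂μ ≤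
      (2 * R) ^ (p + finrank ℝ E) * ∫ ξ in ball (0 : E) 1, rieszKernel p ξ ∂μ := by
    rw [← setIntegral_ball_rieszKernel (by positivity)]
    simp only [rieszKernel_sub_comm p x, sub_eq_add_neg _ x]
    refine (setIntegral_ball_rieszKernel_add_le hp R (-x)).trans
      (setIntegral_mono_set (integrableOn_ball_rieszKernel hp _)
        (Eventually.of_forall (rieszKernel_nonneg p)) (ball_subset_ball ?_).eventuallyLE)
    rw [norm_neg]
    linarith [mem_ball_zero_iff.1 hx]
  have hdom : IntegrableOn (fun y => rieszKernel p (x - y) * M) (ball 0 R) μ :=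
    integrableOn_rieszKernel_sub_mul_of_continuous hp continuous_const x
  have hbound : ∀ᵐ y ∂μ.restrict (ball 0 R),
      ‖rieszKernel p (x - y) * f y‖ ≤ rieszKernel p (x - y) * M := by
    refine ae_restrict_of_forall_mem measurableSet_ball fun y hy => ?_
    rw [norm_mul, Real.norm_of_nonneg (rieszKernel_nonneg p _)]
    exact mul_le_mul_of_nonneg_left (hM y hy) (rieszKernel_nonneg p _)
  calc |rieszPotential μ p (ball 0 R) f x| ≤ ∫ y in ball 0 R, rieszKernel p (x - y) * M ∂μ :=
        norm_integral_le_of_norm_le hdom hbound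
    _ ≤ (2 * R) ^ (p + finrank ℝ E) * (∫ ξ in ball (0 : E) 1, rieszKernel p ξ ∂μ) * M := by
        rw [integral_mul_const]
        exact mul_le_mul_of_nonneg_right hkernel hM₀
    _ = _ := by rw [Real.mul_rpow two_pos.le hR.le]; ring

end RieszPotential

section PolynomialDensity

open Module Polynomial

variable {E : Type*} [NormedAddCommGroup E] [InnerProductSpace ℝ E]

lemma exists_add_smul_mem_ball_iff {R : ℝ} {x θ : E} (hx : x ∈ ball 0 R) (hθ : ‖θ‖ = 1) :
    ∃ a > 0, ∃ b < 0, a + b = -2 * inner ℝ x θ ∧ a * b = ‖x‖ ^ 2 - R ^ 2 ∧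
      ∀ s : ℝ, x + s • θ ∈ ball 0 R ↔ s ∈ Ioo b a := by
  rw [mem_ball_zero_iff] at hx
  set t : ℝ := inner ℝ x θ
  have hgap : 0 < R ^ 2 - ‖x‖ ^ 2 := by nlinarith [norm_nonneg x]
  set q := √(t ^ 2 + (R ^ 2 - ‖x‖ ^ 2))
  have hq : q ^ 2 = t ^ 2 + (R ^ 2 - ‖x‖ ^ 2) := Real.sq_sqrt (by positivity)
  have htq : |t| < q := abs_lt_of_sq_lt_sq (by linarith) (Real.sqrt_nonneg _)
  obtain ⟨htq₁, htq₂⟩ := abs_lt.1 htq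
  refine ⟨-t + q, by linarith, -t - q, by linarith, by ring, by linear_combination -hq,
    fun s => ?_⟩
  have hnorm : ‖x + s • θ‖ ^ 2 - R ^ 2 = (s + t) ^ 2 - q ^ 2 := by
    rw [norm_add_sq_real, norm_smul, hθ, inner_smul_right, mul_one, Real.norm_eq_abs, sq_abs, hq]
    ring
  rw [mem_ball_zero_iff, ← sq_lt_sq₀ (norm_nonneg _) ((norm_nonneg x).trans hx.le), ← sub_neg,
    hnorm, sub_neg, sq_lt_sq, abs_of_nonneg (Real.sqrt_nonneg _ : 0 ≤ q), abs_lt, mem_Ioo]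
  constructor <;> rintro ⟨h₁, h₂⟩ <;> constructor <;> linarith

lemma IsPolyMap.add_smul_eq {F : Type*} [NormedAddCommGroup F] [NormedSpace ℝ F] [CompleteSpace F]
    {m : ℕ} {T : E → F} (hT : IsPolyMap m T) (x θ : E) (s : ℝ) :
    T (x + s • θ) = ∑ j ∈ Finset.range (m + 1),
      s ^ j • (j ! : ℝ)⁻¹ • iteratedFDeriv ℝ j T x fun _ => θ := by
  rw [← hT.taylorPoly_eq x, taylorPoly]
  refine Finset.sum_congr rfl fun j _ => ?_
  rw [add_sub_cancel_left, ContinuousMultilinearMap.map_smul_univ _ (fun _ => s) fun _ => θ,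
    Finset.prod_const, Finset.card_univ, Fintype.card_fin, smul_comm]

variable [Nontrivial E] {m q : ℕ} {T : E → ℝ} {x θ : E} {R a : ℝ}

lemma pow_mul_indicator_rieszKernel_eqOn [FiniteDimensional ℝ E] (hT : IsPolyMap m T)
    (hθ : ‖θ‖ = 1) (ha : ∀ s > 0, x + s • θ ∈ ball 0 R ↔ s < a) :
    EqOn (fun s : ℝ => s ^ (finrank ℝ E - 1) * (ball 0 R).indicator
        (fun y => rieszKernel (q + 1 - finrank ℝ E) (x - y) * T y) (x + s • θ))
      ((Iio a).indicator fun s => ∑ j ∈ Finset.range (m + 1),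
        ((j ! : ℝ)⁻¹ * iteratedFDeriv ℝ j T x fun _ => θ) * s ^ (j + q)) (Ioi 0) := by
  intro s (hs : 0 < s)
  have hweight : s ^ (finrank ℝ E - 1) * rieszKernel (q + 1 - finrank ℝ E) (x - (x + s • θ)) =
      s ^ q := by
    rw [rieszKernel, sub_add_cancel_left, norm_neg, norm_smul, hθ, mul_one,
      Real.norm_of_nonneg hs.le, ← Real.rpow_natCast, ← Real.rpow_natCast, ← Real.rpow_add hs,
      Nat.cast_pred finrank_pos]
    ring_nf
  by_cases hsa : s < a
  · simp only [indicator_of_mem ((ha s hs).2 hsa), indicator_of_mem (mem_Iio.2 hsa)]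
    rw [← mul_assoc, hweight, hT.add_smul_eq, Finset.mul_sum]
    refine Finset.sum_congr rfl fun j _ => ?_
    simp only [smul_eq_mul]
    ring
  · simp only [indicator_of_notMem (mt (ha s hs).1 hsa), indicator_of_notMem (mt mem_Iio.1 hsa),
      mul_zero]

lemma integrableOn_indicator_Iio_of_continuous {g : ℝ → ℝ} (hg : Continuous g) (a : ℝ) :
    IntegrableOn ((Iio a).indicator g) (Ioi 0) := by
  rw [IntegrableOn, integrable_indicator_iff measurableSet_Iio, IntegrableOn,
    Measure.restrict_restrict measurableSet_Iio, inter_comm, Ioi_inter_Iio]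
  exact hg.integrableOn_Icc.mono_set Ioo_subset_Icc_self

lemma integrableOn_pow_mul_indicator_rieszKernel [FiniteDimensional ℝ E] (hT : IsPolyMap m T)
    (hθ : ‖θ‖ = 1) (ha : ∀ s > 0, x + s • θ ∈ ball 0 R ↔ s < a) :
    IntegrableOn (fun s : ℝ => s ^ (finrank ℝ E - 1) * (ball 0 R).indicator
      (fun y => rieszKernel (q + 1 - finrank ℝ E) (x - y) * T y) (x + s • θ)) (Ioi 0) :=
  (integrableOn_indicator_Iio_of_continuous (by fun_prop) a).congr_fun
    (pow_mul_indicator_rieszKernel_eqOn hT hθ ha).symm measurableSet_Ioi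

lemma setIntegral_pow_mul_indicator_rieszKernel [FiniteDimensional ℝ E] (hT : IsPolyMap m T)
    (hθ : ‖θ‖ = 1) (ha₀ : 0 ≤ a) (ha : ∀ s > 0, x + s • θ ∈ ball 0 R ↔ s < a) :
    ∫ s in Ioi (0 : ℝ), s ^ (finrank ℝ E - 1) * (ball 0 R).indicator
        (fun y => rieszKernel (q + 1 - finrank ℝ E) (x - y) * T y) (x + s • θ) =
      ∑ j ∈ Finset.range (m + 1), ((j ! : ℝ)⁻¹ * iteratedFDeriv ℝ j T x fun _ => θ) *
        (a ^ (j + q + 1) / ((j + q : ℕ) + 1)) := by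
  rw [setIntegral_congr_fun measurableSet_Ioi (pow_mul_indicator_rieszKernel_eqOn hT hθ ha),
    setIntegral_indicator measurableSet_Iio, Ioi_inter_Iio, ← integral_Ioc_eq_integral_Ioo,
    ← intervalIntegral.integral_of_le ha₀, intervalIntegral.integral_finsetSum
      fun j _ => Continuous.intervalIntegrable (by fun_prop) _ _]
  simp only [intervalIntegral.integral_const_mul, integral_pow, zero_pow (Nat.succ_ne_zero _),
    sub_zero]

lemma setIntegral_pow_mul_indicator_rieszKernel_symm [FiniteDimensional ℝ E] (hq : Odd q)
    (hT : IsPolyMap m T) (hx : x ∈ ball 0 R) (hθ : ‖θ‖ = 1) :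
    ∫ s in Ioi (0 : ℝ),
        (s ^ (finrank ℝ E - 1) * (ball 0 R).indicator
            (fun y => rieszKernel (q + 1 - finrank ℝ E) (x - y) * T y) (x + s • θ) +
          s ^ (finrank ℝ E - 1) * (ball 0 R).indicator
            (fun y => rieszKernel (q + 1 - finrank ℝ E) (x - y) * T y) (x + s • -θ)) / 2 =
      ∑ j ∈ Finset.range (m + 1), (2 * ((j + q : ℕ) + 1 : ℝ))⁻¹ *
        (((j ! : ℝ)⁻¹ * iteratedFDeriv ℝ j T x fun _ => θ) *
          (dickson 1 (‖x‖ ^ 2 - R ^ 2) (j + q + 1)).eval (-2 * inner ℝ x θ)) := by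
  obtain ⟨a, ha, b, hb, hadd, hmul, hball⟩ := exists_add_smul_mem_ball_iff hx hθ
  have hθ' : ‖-θ‖ = 1 := by rwa [norm_neg]
  have hpos : ∀ s > 0, x + s • θ ∈ ball 0 R ↔ s < a := fun s hs => by
    rw [hball, mem_Ioo, and_iff_right (hb.trans hs)]
  have hneg : ∀ s > 0, x + s • -θ ∈ ball 0 R ↔ s < -b := fun s hs => by
    rw [smul_neg, ← neg_smul, hball, mem_Ioo, and_iff_left (by linarith), lt_neg]
  rw [integral_div, integral_add (integrableOn_pow_mul_indicator_rieszKernel hT hθ hpos)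
    (integrableOn_pow_mul_indicator_rieszKernel hT hθ' hneg),
    setIntegral_pow_mul_indicator_rieszKernel hT hθ ha.le hpos,
    setIntegral_pow_mul_indicator_rieszKernel hT hθ' (neg_nonneg.2 hb.le) hneg,
    ← Finset.sum_add_distrib, Finset.sum_div]
  refine Finset.sum_congr rfl fun j _ => ?_
  have hodd : (iteratedFDeriv ℝ j T x fun _ => -θ) =
      (-1) ^ j * iteratedFDeriv ℝ j T x fun _ => θ := by
    simpa using (iteratedFDeriv ℝ j T x).map_smul_univ (fun _ => (-1 : ℝ)) fun _ => θ
  have hsign : (-1) ^ j * (-b) ^ (j + q + 1) = b ^ (j + q + 1) := by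
    rw [neg_pow b, ← mul_assoc, ← pow_add, Even.neg_one_pow (by grind), one_mul]
  have hj : ((j + q : ℕ) + 1 : ℝ) ≠ 0 := by positivity
  rw [hodd, ← hadd, ← hmul, eval_dickson_one_mul, ← hsign]
  field_simp

variable [FiniteDimensional ℝ E] [MeasurableSpace E] [BorelSpace E]

theorem exists_isPolyMap_rieszPotential_eq (μ : Measure E) [μ.IsAddHaarMeasure]
    (hq : Odd q) (hT : IsPolyMap m T) (R : ℝ) :
    ∃ Q : E → ℝ, IsPolyMap (m + q + 1) Q ∧ ∀ x ∈ ball 0 R,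
      rieszPotential μ (q + 1 - finrank ℝ E) (ball 0 R) T x = Q x := by
  set V : E → C(sphere (0 : E) 1, ℝ) := fun x => ∑ j ∈ Finset.range (m + 1),
    (2 * ((j + q : ℕ) + 1 : ℝ))⁻¹ •
      (sphereRestrict E j ((j ! : ℝ)⁻¹ • iteratedFDeriv ℝ j T x) *
        (dickson 1 (algebraMap ℝ _ (‖x‖ ^ 2 - R ^ 2)) (j + q + 1)).eval
          ((-2 : ℝ) • sphereInner E x)) with hVdef
  have hV : IsPolyMap (m + q + 1) V := by
    refine IsPolyMap.sum fun j hj => .const_smul ?_ _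
    have hjm : m - j + j = m := by grind
    have hcoeff : IsPolyMap (m - j) (iteratedFDeriv ℝ j T) :=
      IsPolyMap.iteratedFDeriv (by rwa [hjm])
    have htrace : IsPolyMap 1 fun x => (-2 : ℝ) • sphereInner E x :=
      (IsPolyMap.continuousLinearMap _).const_smul _
    have hgap : IsPolyMap (2 * 1) fun x : E =>
        algebraMap ℝ C(sphere (0 : E) 1, ℝ) (‖x‖ ^ 2 - R ^ 2) :=
      (isPolyMap_norm_sq.sub (.const 2 (R ^ 2))).clm_comp
        (algebraMapCLM ℝ C(sphere (0 : E) 1, ℝ))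
    exact (((hcoeff.const_smul _).clm_comp (sphereRestrict E j)).mul
      (htrace.eval_dickson hgap (j + q + 1))).mono (by grind)
  refine ⟨_, hV.integral_continuousMap μ.toSphere, fun x hx => ?_⟩
  have hp : (0 : ℝ) < q + 1 - finrank ℝ E + finrank ℝ E := by rw [sub_add_cancel]; positivity
  rw [rieszPotential, ← integral_indicator measurableSet_ball, integral_eq_integral_toSphere_symm
    ((integrable_indicator_iff measurableSet_ball).2
      (integrableOn_rieszKernel_sub_mul_of_continuous hp (hT.contDiff_nat 0).continuous x)) x]
  congr 1
  ext θ
  rw [setIntegral_pow_mul_indicator_rieszKernel_symm hq hT hx (norm_eq_of_mem_sphere θ)]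
  have heval : ∀ (d t : C(sphere (0 : E) 1, ℝ)) (i : ℕ),
      (dickson 1 d i).eval t θ = (dickson 1 (d θ) i).eval (t θ) := fun d t i =>
    map_eval_dickson (ContinuousMap.evalAlgHom ℝ ℝ θ : C(sphere (0 : E) 1, ℝ) →+* ℝ) d t i
  simp only [hVdef, ContinuousMap.coe_sum, Finset.sum_apply, ContinuousMap.smul_apply,
    ContinuousMap.mul_apply, heval]
  rfl

end PolynomialDensity

section HolderEstimate

open Module

/-- Regularity of class `C^{k,α}` on `s` with explicit constants: the `k`-th derivative of `f` is
bounded by `S` on `s`, and it is `α`-Hölder continuous there with constant `H`. -/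
structure HolderBoundsOn {E : Type*} [NormedAddCommGroup E] [NormedSpace ℝ E] (k : ℕ) (α S H : ℝ)
    (f : E → ℝ) (s : Set E) : Prop where
  contDiffOn : ContDiffOn ℝ k f s
  norm_le : ∀ x ∈ s, ‖iteratedFDeriv ℝ k f x‖ ≤ S
  norm_sub_le : ∀ x ∈ s, ∀ y ∈ s,
    ‖iteratedFDeriv ℝ k f x - iteratedFDeriv ℝ k f y‖ ≤ H * ‖x - y‖ ^ α

namespace HolderBoundsOn

variable {E : Type*} [NormedAddCommGroup E] [NormedSpace ℝ E] {k : ℕ} {α S H : ℝ} {f : E → ℝ}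
  {s : Set E} {x y : E}

lemma abs_sub_taylorPoly_le (h : HolderBoundsOn k α S H f s) (hs : IsOpen s) (hs' : Convex ℝ s)
    (hx : x ∈ s) (hy : y ∈ s) : |f y - taylorPoly f k x y| ≤ S * ‖y - x‖ ^ k := by
  have hseg : ∀ t ∈ Icc (0 : ℝ) 1, x + t • (y - x) ∈ s := fun t ht =>
    hs'.add_smul_sub_mem hx hy ht
  simpa only [add_sub_cancel, Real.norm_eq_abs] using norm_sub_taylorPoly_le
    (fun t ht => h.contDiffOn.contDiffAt (hs.mem_nhds (hseg t ht)))
    (fun t ht => h.norm_le _ (hseg t ht))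

lemma abs_sub_taylorPoly_succ_le (h : HolderBoundsOn k α S H f s) (hs : IsOpen s)
    (hs' : Convex ℝ s) (hα : 0 < α) (hH : 0 ≤ H) (hx : x ∈ s) (hy : y ∈ s) :
    |f y - taylorPoly f (k + 1) x y| ≤ H * ‖y - x‖ ^ (k + α) := by
  have hseg : ∀ t ∈ Icc (0 : ℝ) 1, x + t • (y - x) ∈ s := fun t ht =>
    hs'.add_smul_sub_mem hx hy ht
  have hB : ∀ t ∈ Icc (0 : ℝ) 1,
      ‖iteratedFDeriv ℝ k f (x + t • (y - x)) - iteratedFDeriv ℝ k f x‖ ≤ H * ‖y - x‖ ^ α := by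
    intro t ht
    refine (h.norm_sub_le _ (hseg t ht) x hx).trans ?_
    rw [add_sub_cancel_left, norm_smul, Real.norm_of_nonneg ht.1]
    have := ht.1
    refine mul_le_mul_of_nonneg_left (Real.rpow_le_rpow (by positivity) ?_ hα.le) hH
    exact mul_le_of_le_one_left (norm_nonneg _) ht.2
  rw [add_comm (k : ℝ), Real.rpow_add_natCast' (norm_nonneg _) (by positivity), ← mul_assoc]
  simpa only [add_sub_cancel, Real.norm_eq_abs] using norm_sub_taylorPoly_succ_le
    (fun t ht => h.contDiffOn.contDiffAt (hs.mem_nhds (hseg t ht))) hB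

lemma const_smul (h : HolderBoundsOn k α S H f s) (hs : IsOpen s) (c : ℝ) :
    HolderBoundsOn k α (|c| * S) (|c| * H) (c • f) s := by
  have hderiv : ∀ x ∈ s, iteratedFDeriv ℝ k (c • f) x = c • iteratedFDeriv ℝ k f x := fun x hx =>
    iteratedFDeriv_const_smul_apply (h.contDiffOn.contDiffAt (hs.mem_nhds hx))
  refine ⟨h.contDiffOn.const_smul c, fun x hx => ?_, fun x hx y hy => ?_⟩
  · rw [hderiv x hx, norm_smul, Real.norm_eq_abs]
    exact mul_le_mul_of_nonneg_left (h.norm_le x hx) (abs_nonneg c)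
  · rw [hderiv x hx, hderiv y hy, ← smul_sub, norm_smul, Real.norm_eq_abs, mul_assoc]
    exact mul_le_mul_of_nonneg_left (h.norm_sub_le x hx y hy) (abs_nonneg c)

end HolderBoundsOn

variable {E : Type} [NormedAddCommGroup E] [InnerProductSpace ℝ E] [FiniteDimensional ℝ E]
  [Nontrivial E] [MeasurableSpace E] [BorelSpace E] (μ : Measure E) [μ.IsAddHaarMeasure]
  {q : ℕ} {α : ℝ}

lemma exists_isPolyMap_abs_rieszPotential_sub_le (hq : Odd q) (k : ℕ) (hα₀ : 0 < α) (hα₁ : α < 1) :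
    ∃ C ≥ 0, ∀ {R S H : ℝ} {f : E → ℝ}, HolderBoundsOn k α S H f (ball 0 R) → 0 ≤ H →
      ∀ x ∈ ball 0 R, ∃ P : E → ℝ, IsPolyMap (k + q + 1) P ∧ ∀ z ∈ ball 0 R,
        |rieszPotential μ (q + 1 - finrank ℝ E) (ball 0 R) f z - P z| ≤
          C * H * ‖z - x‖ ^ ((k + q + 1 : ℕ) + α) := by
  set p : ℝ := q + 1 - finrank ℝ E
  have hpd : p + finrank ℝ E = q + 1 := sub_add_cancel _ _
  have hp : 0 < p + finrank ℝ E := by rw [hpd]; positivity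
  have hexp : p + finrank ℝ E + (k + α) = (k + q + 1 : ℕ) + α := by rw [hpd]; push_cast; ring
  obtain ⟨C, hC, hexpand⟩ := exists_isPolyMap_abs_integral_rieszKernel_sub_le μ hp
    (by positivity : 0 ≤ k + α) (N := k + q + 1) (by linarith) (by linarith)
  refine ⟨C, hC, fun {R S H f} h hH x hx => ?_⟩
  have hT := isPolyMap_taylorPoly f k x
  set T := taylorPoly f (k + 1) x
  have hTf : ∀ y ∈ ball 0 R, |f y - T y| ≤ H * ‖y - x‖ ^ (k + α) := fun y hy =>
    h.abs_sub_taylorPoly_succ_le isOpen_ball (convex_ball _ _) hα₀ hH hx hy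
  have hTf' : ∀ y ∈ ball 0 R, |f y - T y| ≤ H * (R + R) ^ (k + α) := fun y hy => by
    refine (hTf y hy).trans ?_
    gcongr
    exact norm_sub_le_of_le (mem_ball_zero_iff.1 hy).le (mem_ball_zero_iff.1 hx).le
  have hTcont : Continuous T := (hT.contDiff_nat 0).continuous
  have hf := h.contDiffOn.continuousOn.aestronglyMeasurable (μ := μ) measurableSet_ball
  obtain ⟨Q, hQ, hQT⟩ := exists_isPolyMap_rieszPotential_eq μ hq hT R
  obtain ⟨P, hP, hPf⟩ := hexpand (x := x) (a := 0) (ρ := R)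
    (w := (ball 0 R).indicator fun y => f y - T y) hH
    ((aestronglyMeasurable_indicator_iff measurableSet_ball).2
      (hf.sub hTcont.aestronglyMeasurable))
    (fun y => by
      by_cases hy : y ∈ ball (0 : E) R
      · simpa only [indicator_of_mem hy] using hTf y hy
      · simpa only [indicator_of_notMem hy, abs_zero] using by positivity)
    (fun y hy => indicator_of_notMem hy _)
  refine ⟨P + Q, hP.add hQ, fun z hz => ?_⟩
  have hz := hPf z
  rwa [← rieszPotential_eq_integral_indicator μ p measurableSet_ball,
    rieszPotential_sub_of_abs_sub_le hp hf hTcont hTf', hQT z ‹_›, hexp, sub_sub, add_comm (Q z)]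
    at hz

lemma exists_isPolyMap_abs_rieszPotential_sub_le_pow (hq : Odd q) (k : ℕ) (α : ℝ) :
    ∃ C ≥ 0, ∀ {R S H : ℝ} {f : E → ℝ}, HolderBoundsOn k α S H f (ball 0 R) →
      ∃ Q : E → ℝ, IsPolyMap (k + q) Q ∧ ∀ z ∈ ball 0 R,
        |rieszPotential μ (q + 1 - finrank ℝ E) (ball 0 R) f z - Q z| ≤
          C * S * R ^ (k + q + 1) := by
  set p : ℝ := q + 1 - finrank ℝ E with hpdef
  have hpd : p + finrank ℝ E = (q + 1 : ℕ) := by rw [hpdef, sub_add_cancel]; norm_cast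
  have hp : 0 < p + finrank ℝ E := by rw [hpd]; positivity
  obtain ⟨C, hC, hsup⟩ := exists_abs_rieszPotential_le μ hp
  refine ⟨C, hC, fun {R S H f} h => ?_⟩
  set T := taylorPoly f k 0
  obtain ⟨hTcont, Q, hQ, hQT⟩ : Continuous T ∧ ∃ Q : E → ℝ, IsPolyMap (k + q) Q ∧
      ∀ z ∈ ball 0 R, rieszPotential μ p (ball 0 R) T z = Q z := by
    cases k with
    | zero =>
      have hT : T = fun _ => 0 := by ext; simp [T, taylorPoly]
      exact ⟨hT ▸ continuous_const, 0, .const _ 0, fun z _ => by simp [hT, rieszPotential]⟩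
    | succ k =>
      have hT := isPolyMap_taylorPoly f k 0
      exact ⟨(hT.contDiff_nat 0).continuous, add_right_comm k q 1 ▸
        exists_isPolyMap_rieszPotential_eq μ hq hT R⟩
  have hTf : ∀ y ∈ ball 0 R, |f y - T y| ≤ S * R ^ k := fun y hy => by
    have hy' : ‖y‖ < R := mem_ball_zero_iff.1 hy
    have hS : 0 ≤ S := (norm_nonneg _).trans (h.norm_le y hy)
    refine (h.abs_sub_taylorPoly_le isOpen_ball (convex_ball _ _)
      (mem_ball_self ((norm_nonneg y).trans_lt hy')) hy).trans ?_
    rw [sub_zero]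
    gcongr
  have hf := h.contDiffOn.continuousOn.aestronglyMeasurable (μ := μ) measurableSet_ball
  refine ⟨Q, hQ, fun z hz => ?_⟩
  rw [← hQT z hz, ← rieszPotential_sub_of_abs_sub_le hp hf hTcont hTf]
  refine (hsup hTf z hz).trans_eq ?_
  rw [hpd, Real.rpow_natCast]
  ring

theorem exists_holderBoundsOn_rieszPotential (hq : Odd q) (k : ℕ) (hα₀ : 0 < α) (hα₁ : α < 1) :
    ∃ C ≥ 0, ∀ {R S H : ℝ} {f : E → ℝ}, HolderBoundsOn k α S H f (ball 0 R) → 0 ≤ H →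
      HolderBoundsOn (k + q + 1) α (C * (S + R ^ α * H)) (C * H)
        (rieszPotential μ (q + 1 - finrank ℝ E) (ball 0 R) f) (ball 0 R) := by
  obtain ⟨C₁, hC₁, hglobal⟩ := exists_isPolyMap_abs_rieszPotential_sub_le_pow μ hq k α
  obtain ⟨C₂, hC₂, hlocal⟩ := exists_isPolyMap_abs_rieszPotential_sub_le μ hq k hα₀ hα₁
  obtain ⟨C₃, hC₃, hnorm⟩ :=
    HasPolyApproxOn.exists_norm_iteratedFDeriv_le (E := E) (k + q + 1) hα₀
  obtain ⟨C₄, hC₄, hholder⟩ :=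
    HasPolyApproxOn.exists_norm_iteratedFDeriv_sub_le (E := E) (k + q + 1) hα₀
  refine ⟨C₃ * (C₁ + C₂) + C₄ * C₂, by positivity, fun {R S H f} h hH => ?_⟩
  obtain ⟨Q, hQ, hQf⟩ := hglobal h
  choose! P hP hPf using hlocal h hH
  have happrox : HasPolyApproxOn (k + q + 1) ((k + q + 1 : ℕ) + α) (C₂ * H)
    (rieszPotential μ (q + 1 - finrank ℝ E) (ball 0 R) f) P (ball 0 R) := ⟨hP, hPf⟩
  have hA : 0 ≤ C₂ * H := by positivity
  refine ⟨happrox.contDiffOn hα₀ hA, fun x hx => ?_, fun x hx y hy => ?_⟩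
  · have hR : 0 < R := (norm_nonneg x).trans_lt (mem_ball_zero_iff.1 hx)
    have hS : 0 ≤ S := (norm_nonneg _).trans (h.norm_le x hx)
    calc _ ≤ C₃ * (C₁ * S * R ^ (k + q + 1) + C₂ * H * R ^ ((k + q + 1 : ℕ) + α)) /
          R ^ (k + q + 1) := hnorm happrox hA hQ (by lia) hQf x hx
      _ = C₃ * C₁ * S + C₃ * C₂ * (R ^ α * H) := by
        rw [Real.rpow_add hR, Real.rpow_natCast]
        field_simp
      _ ≤ (C₃ * (C₁ + C₂) + C₄ * C₂) * (S + R ^ α * H) := by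
        have hrest : 0 ≤ C₃ * C₁ * (R ^ α * H) + C₃ * C₂ * S + C₄ * C₂ * (S + R ^ α * H) := by
          positivity
        linarith
  · refine (hholder happrox hA x hx y hy).trans ?_
    rw [← mul_assoc]
    gcongr
    exact le_add_of_nonneg_left (by positivity)

end HolderEstimate

section CoordinateNorms

variable {n k : ℕ} {R α S H : ℝ} {f : EuclideanSpace ℝ (Fin n) → ℝ}

lemma abs_apply_ee_le (A : EuclideanSpace ℝ (Fin n) [×k]→L[ℝ] ℝ) (v : Fin k → Fin n) :
    |A fun i => ee (v i)| ≤ ‖A‖ := by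
  simpa [ee] using A.le_opNorm fun i => ee (v i)

lemma norm_le_of_abs_apply_ee_le {A : EuclideanSpace ℝ (Fin n) [×k]→L[ℝ] ℝ} {M : ℝ} (hM : 0 ≤ M)
    (h : ∀ v : Fin k → Fin n, |A fun i => ee (v i)| ≤ M) : ‖A‖ ≤ (n : ℝ) ^ k * M := by
  refine A.opNorm_le_bound (by positivity) fun x => ?_
  have hexpand : A x = ∑ v : Fin k → Fin n, (∏ i, x i (v i)) • A fun i => ee (v i) := by
    have hx : x = fun i => ∑ j, x i j • ee j := by
      ext i j
      simp [ee, Pi.single_apply]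
    conv_lhs => rw [hx, A.map_sum]
    exact Finset.sum_congr rfl fun v _ => A.map_smul_univ _ _
  calc ‖A x‖ ≤ ∑ _v : Fin k → Fin n, (∏ i, ‖x i‖) * M := by
        rw [hexpand]
        refine norm_sum_le_of_le _ fun v _ => ?_
        rw [norm_smul, norm_prod]
        refine mul_le_mul (Finset.prod_le_prod (fun i _ => norm_nonneg _) fun i _ => ?_) (h v)
          (abs_nonneg _) (Finset.prod_nonneg fun i _ => norm_nonneg _)
        exact PiLp.norm_apply_le (x i) (v i)
    _ = (n : ℝ) ^ k * M * ∏ i, ‖x i‖ := by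
        rw [Finset.sum_const, Finset.card_univ, Fintype.card_fun, Fintype.card_fin,
          Fintype.card_fin, nsmul_eq_mul, Nat.cast_pow]
        ring

lemma supN_nonneg (s : Set (EuclideanSpace ℝ (Fin n))) (g : EuclideanSpace ℝ (Fin n) → ℝ) :
    0 ≤ supN s g :=
  Real.sSup_nonneg <| forall_mem_image.2 fun _ _ => abs_nonneg _

lemma holdN_nonneg (α : ℝ) (s : Set (EuclideanSpace ℝ (Fin n)))
    (g : EuclideanSpace ℝ (Fin n) → ℝ) : 0 ≤ holdN α s g := by
  refine Real.sSup_nonneg ?_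
  rintro _ ⟨x, _, y, _, _, rfl⟩
  positivity

lemma kNorm_nonneg (hR : 0 ≤ R) (α : ℝ) (k : ℕ) (f : EuclideanSpace ℝ (Fin n) → ℝ) :
    0 ≤ kNorm n R α k f :=
  Real.iSup_nonneg fun _ =>
    add_nonneg (supN_nonneg _ _) (mul_nonneg (by positivity) (holdN_nonneg _ _ _))

lemma alphaNorm_le_kNorm (R α : ℝ) (f : EuclideanSpace ℝ (Fin n) → ℝ) (v : Fin k → Fin n) :
    alphaNorm n R α (fun x => iteratedFDeriv ℝ k f x fun i => ee (v i)) ≤ kNorm n R α k f :=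
  le_ciSup (f := fun v : Fin k → Fin n =>
    alphaNorm n R α fun x => iteratedFDeriv ℝ k f x fun i => ee (v i))
    (Set.finite_range _).bddAbove v

lemma memCkα.abs_iteratedFDeriv_apply_ee_le (h : memCkα n k R α f) (v : Fin k → Fin n)
    {x : EuclideanSpace ℝ (Fin n)} (hx : x ∈ ball 0 R) :
    |iteratedFDeriv ℝ k f x fun i => ee (v i)| ≤ kNorm n R α k f := by
  have hR : 0 ≤ R := dist_nonneg.trans (mem_ball.1 hx).le
  calc _ ≤ supN (ball 0 R) fun x => iteratedFDeriv ℝ k f x fun i => ee (v i) :=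
        le_csSup (h.2 v).1 ⟨x, hx, rfl⟩
    _ ≤ _ := le_add_of_nonneg_right (mul_nonneg (by positivity) (holdN_nonneg _ _ _))
    _ ≤ _ := alphaNorm_le_kNorm R α f v

lemma memCkα.abs_iteratedFDeriv_apply_ee_sub_le (h : memCkα n k R α f) (v : Fin k → Fin n)
    {x y : EuclideanSpace ℝ (Fin n)} (hx : x ∈ ball 0 R) (hy : y ∈ ball 0 R) :
    |(iteratedFDeriv ℝ k f x - iteratedFDeriv ℝ k f y) fun i => ee (v i)| ≤
      kNorm n R α k f / R ^ α * ‖x - y‖ ^ α := by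
  have hR : 0 < R := dist_nonneg.trans_lt (mem_ball.1 hx)
  rcases eq_or_ne x y with rfl | hxy
  · simpa using mul_nonneg (div_nonneg (kNorm_nonneg hR.le α k f) (by positivity)) (by positivity)
  have hxy' : 0 < ‖x - y‖ := norm_sub_pos_iff.2 hxy
  rw [← div_le_iff₀ (by positivity), le_div_iff₀' (by positivity)]
  calc _ ≤ R ^ α * holdN α (ball 0 R) fun x => iteratedFDeriv ℝ k f x fun i => ee (v i) := by
        gcongr
        exact le_csSup (h.2 v).2 ⟨x, hx, y, hy, hxy, rfl⟩
    _ ≤ _ := le_add_of_nonneg_left (supN_nonneg _ _)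
    _ ≤ _ := alphaNorm_le_kNorm R α f v

lemma memCkα.holderBoundsOn (h : memCkα n k R α f) (hR : 0 < R) :
    HolderBoundsOn k α ((n : ℝ) ^ k * kNorm n R α k f)
      ((n : ℝ) ^ k * (kNorm n R α k f / R ^ α)) f (ball 0 R) where
  contDiffOn := h.1
  norm_le x hx := norm_le_of_abs_apply_ee_le (kNorm_nonneg hR.le α k f) fun v =>
    h.abs_iteratedFDeriv_apply_ee_le v hx
  norm_sub_le x hx y hy := by
    have hnonneg := kNorm_nonneg hR.le α k f
    rw [mul_assoc]
    exact norm_le_of_abs_apply_ee_le (by positivity) fun v =>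
      h.abs_iteratedFDeriv_apply_ee_sub_le v hx hy

lemma HolderBoundsOn.abs_iteratedFDeriv_apply_ee_sub_div_le {s : Set (EuclideanSpace ℝ (Fin n))}
    (h : HolderBoundsOn k α S H f s) (v : Fin k → Fin n) {x y : EuclideanSpace ℝ (Fin n)}
    (hx : x ∈ s) (hy : y ∈ s) (hxy : x ≠ y) :
    |(iteratedFDeriv ℝ k f x fun i => ee (v i)) - iteratedFDeriv ℝ k f y fun i => ee (v i)| /
      ‖x - y‖ ^ α ≤ H := by
  have hxy' : 0 < ‖x - y‖ := norm_sub_pos_iff.2 hxy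
  rw [div_le_iff₀ (by positivity)]
  exact (abs_apply_ee_le (iteratedFDeriv ℝ k f x - iteratedFDeriv ℝ k f y) v).trans
    (h.norm_sub_le x hx y hy)

lemma HolderBoundsOn.memCkα (h : HolderBoundsOn k α S H f (ball 0 R)) : memCkα n k R α f := by
  refine ⟨h.contDiffOn, fun v => ⟨⟨S, forall_mem_image.2 fun x hx =>
    (abs_apply_ee_le _ v).trans (h.norm_le x hx)⟩, ⟨H, ?_⟩⟩⟩
  rintro _ ⟨x, hx, y, hy, hxy, rfl⟩
  exact h.abs_iteratedFDeriv_apply_ee_sub_div_le v hx hy hxy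

lemma HolderBoundsOn.kNorm_le (h : HolderBoundsOn k α S H f (ball 0 R)) (hR : 0 < R)
    (hH : 0 ≤ H) : kNorm n R α k f ≤ S + R ^ α * H := by
  have hS : 0 ≤ S := (norm_nonneg _).trans (h.norm_le 0 (mem_ball_self hR))
  refine Real.iSup_le (fun v => ?_) (by positivity)
  refine add_le_add (Real.sSup_le (forall_mem_image.2 fun x hx =>
    (abs_apply_ee_le _ v).trans (h.norm_le x hx)) hS) ?_
  refine mul_le_mul_of_nonneg_left (Real.sSup_le ?_ hH) (by positivity)
  rintro _ ⟨x, hx, y, hy, hxy, rfl⟩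
  exact h.abs_iteratedFDeriv_apply_ee_sub_div_le v hx hy hxy

end CoordinateNorms

section NewtonianPotential

variable {n k : ℕ} {α : ℝ}

lemma newt_eq_smul_rieszPotential (n : ℕ) (R : ℝ) (f : EuclideanSpace ℝ (Fin n) → ℝ) :
    newt n R f = (1 / (n * (2 - (n : ℝ)) * sphArea n)) •
      rieszPotential volume (2 - n) (ball 0 R) f := by
  ext x
  simp only [newt, fundSol, Pi.smul_apply, smul_eq_mul, rieszPotential, rieszKernel,
    ← integral_const_mul, mul_assoc]

theorem exists_kNorm_newt_le (hn : 3 ≤ n) (k : ℕ) (hα₀ : 0 < α) (hα₁ : α < 1) :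
    ∃ C > 0, ∀ R : ℝ, 0 < R → ∀ f : EuclideanSpace ℝ (Fin n) → ℝ, memCkα n k R α f →
      memCkα n (k + 2) R α (newt n R f) ∧
        kNorm n R α (k + 2) (newt n R f) ≤ C * kNorm n R α k f := by
  have : Nonempty (Fin n) := ⟨⟨0, by lia⟩⟩
  obtain ⟨C, hC, hriesz⟩ := exists_holderBoundsOn_rieszPotential
    (volume : Measure (EuclideanSpace ℝ (Fin n))) odd_one k hα₀ hα₁
  have hp : ((1 : ℕ) + 1 - Module.finrank ℝ (EuclideanSpace ℝ (Fin n)) : ℝ) = 2 - n := by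
    rw [finrank_euclideanSpace_fin]
    norm_num
  set c : ℝ := 1 / (n * (2 - (n : ℝ)) * sphArea n)
  refine ⟨3 * |c| * C * (n : ℝ) ^ k + 1, by positivity, fun R hR f hf => ?_⟩
  set N := kNorm n R α k f
  have hN : 0 ≤ N := kNorm_nonneg hR.le α k f
  have hbounds := (hriesz (hf.holderBoundsOn hR) (by positivity)).const_smul isOpen_ball c
  rw [hp, ← newt_eq_smul_rieszPotential] at hbounds
  refine ⟨hbounds.memCkα, (hbounds.kNorm_le hR (by positivity)).trans ?_⟩
  calc _ = 3 * |c| * C * (n : ℝ) ^ k * N := by field_simp; ring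
    _ ≤ _ := by linarith

theorem exists_kNorm_iterate_newt_le (hn : 3 ≤ n) (k : ℕ) (hα₀ : 0 < α) (hα₁ : α < 1) (m : ℕ) :
    ∃ C > 0, ∀ R : ℝ, 0 < R → ∀ f : EuclideanSpace ℝ (Fin n) → ℝ, memCkα n k R α f →
      memCkα n (k + 2 * m) R α ((newt n R)^[m] f) ∧
        kNorm n R α (k + 2 * m) ((newt n R)^[m] f) ≤ C * kNorm n R α k f := by
  induction m with
  | zero => exact ⟨1, one_pos, fun R _ f hf => ⟨hf, (one_mul _).ge⟩⟩
  | succ m ih =>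
    obtain ⟨C, hC, hm⟩ := ih
    obtain ⟨C', hC', hnewt⟩ := exists_kNorm_newt_le hn (k + 2 * m) hα₀ hα₁
    refine ⟨C' * C, by positivity, fun R hR f hf => ?_⟩
    obtain ⟨hmem, hle⟩ := hm R hR f hf
    obtain ⟨hmem', hle'⟩ := hnewt R hR _ hmem
    rw [Function.iterate_succ_apply', mul_assoc]
    exact ⟨hmem', hle'.trans (by gcongr)⟩

end NewtonianPotential

theorem stmt_16 (n k : ℕ) (hn : 3 ≤ n) (α : ℝ) (hα0 : 0 < α) (hα1 : α < 1) :
    (∃ C > 0, ∀ R : ℝ, 0 < R → ∀ f : EuclideanSpace ℝ (Fin n) → ℝ,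
      memCkα n k R α f →
        ContDiffOn ℝ (k + 2) (newt n R f) (ball (0 : EuclideanSpace ℝ (Fin n)) R) ∧
        kNorm n R α (k + 2) (newt n R f) ≤ C * kNorm n R α k f) ∧
    ∀ m : ℕ, 1 ≤ m → ∃ C > 0, ∀ R : ℝ, 0 < R → ∀ f : EuclideanSpace ℝ (Fin n) → ℝ,
      memCkα n k R α f →
        kNorm n R α (k + 2 * m) ((newt n R)^[m] f) ≤ C * kNorm n R α k f := by
  constructor
  · obtain ⟨C, hC, hnewt⟩ := exists_kNorm_newt_le hn k hα0 hα1
    refine ⟨C, hC, fun R hR f hf => ?_⟩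
    obtain ⟨hmem, hle⟩ := hnewt R hR f hf
    exact ⟨mod_cast hmem.1, hle⟩
  · intro m _
    obtain ⟨C, hC, hiterate⟩ := exists_kNorm_iterate_newt_le hn k hα0 hα1 m
    exact ⟨C, hC, fun R hR f hf => (hiterate R hR f hf).2⟩
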